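/- For every prime number p, every finite p-group that is an E-group and has order at most p^6 is abelian. -/

import Mathlib

/-- A group is an `E`-group if every element commutes with all of its
endomorphic images. -/
def IsEGroup (G : Type*) [Group G] : Prop :=
  ∀ (φ : G →* G) (x : G), x * φ x = φ x * x

/-!
An `E`-group commutes elementwise with its conjugates, so it is 2-Engel. In a 2-Engel `p`-group
`⁅⁅a, b⁆, c⁆` is alternating modulo the third centre, and if it were nontrivial a chain of
centralizers would force order at least `p ^ 7`; hence our group `G` has class at most two.

Let `q` be the exponent of `G / G'`. Homomorphisms `G → ⟨z⟩` show that every `z` with `z ^ q = 1`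
is central, and counting then shows that `p`-th powers are central. So the quotient `V` of `G` by
the elements killed by `q`, and `W = G'`, are vector spaces over `F_p`; commutators give an
alternating form `b : V × V → W` whose values span `W`, `q`-th powers give an anisotropic map
`Q : V → W`, and `dim V + dim W ≤ 6`. Unless `q = 2` the map `Q` is linear, which forces
`dim V = dim W = 3` and then `q = p`; for `q = 2` it is a quadratic form with polar form `b`.

When `q = p`, a pair `(A, B)` of endomorphisms of `V` and `W` compatible with `b` and `Q` lifts to
an endomorphism of `G`: the relation on `G × G` induced by `A` has commutators and `p`-th powers
in the graph of `B`, which therefore has a complement. The `E`-property then says that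
`b x (A x) = 0` for all such pairs. In dimension three `b` is the cross product, and if all such
`A` kept every vector orthogonal to its image, linear `Q` would be too rigid; over `F₂` one counts
the quadratic maps with a given polarization. In every case a pair with `b x (A x) ≠ 0` exists, so
`G` is abelian.
-/

section SubgroupChains

variable {p : ℕ} [Fact p.Prime] {G : Type*} [Group G] [Finite G]

lemma card_mul_le_card_of_lt (hG : IsPGroup p G) {H K : Subgroup G} (hHK : H < K) :
    Nat.card H * p ≤ Nat.card K := by
  have hp : p.Prime := Fact.out
  obtain ⟨m, hm⟩ := IsPGroup.iff_card.mp (hG.to_subgroup H)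
  obtain ⟨n, hn⟩ := IsPGroup.iff_card.mp (hG.to_subgroup K)
  have hlt : Nat.card H < Nat.card K := Set.ncard_lt_ncard (SetLike.coe_ssubset_coe.mpr hHK)
  rw [hm, hn] at hlt ⊢
  rw [← pow_succ]
  exact Nat.pow_le_pow_right hp.pos ((Nat.pow_lt_pow_iff_right hp.one_lt).mp hlt)

lemma card_mul_pow_length_le_card_of_isChain (hG : IsPGroup p G) (H : Subgroup G)
    (l : List (Subgroup G)) (hl : (H :: l).IsChain (· < ·)) :
    Nat.card H * p ^ l.length ≤ Nat.card G := by
  induction l generalizing H with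
  | nil => simpa using Subgroup.card_le_card_group H
  | cons K l ih =>
    rw [List.isChain_cons_cons] at hl
    calc Nat.card H * p ^ (l.length + 1) = Nat.card H * p * p ^ l.length := by ring
      _ ≤ Nat.card K * p ^ l.length := by gcongr; exact card_mul_le_card_of_lt hG hl.1
      _ ≤ Nat.card G := ih K hl.2

end SubgroupChains

section TwoEngel

open scoped commutatorElement

/-- The `2`-Engel condition `⁅⁅x, y⁆, x⁆ = 1`, phrased as a commutation. -/
def IsTwoEngel (G : Type*) [Group G] : Prop :=
  ∀ x y : G, Commute ⁅x, y⁆ x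

namespace IsTwoEngel

variable {G : Type*} [Group G]

lemma commute_right (hG : IsTwoEngel G) (x y : G) : Commute ⁅x, y⁆ y := by
  simpa only [commutatorElement_inv] using (hG y x).inv_left

lemma commute_swap (hG : IsTwoEngel G) {a b c : G} (h : Commute ⁅a, c⁆ b) :
    Commute ⁅a, b⁆ c := by
  have hmul : ⁅a, b * c⁆ = ⁅a, b⁆ * ⁅a, c⁆ := by
    rw [commutatorElement_mul_right_eq_mul_conj, mul_assoc, mul_assoc, ← mul_assoc b, ← h.eq,
      mul_inv_cancel_right]
  have hbc : Commute (⁅a, b⁆ * ⁅a, c⁆) (b * c) := hmul ▸ hG.commute_right a (b * c)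
  have hac : Commute ⁅a, c⁆ (b * c) := h.mul_right (hG.commute_right a c)
  have hab : Commute ⁅a, b⁆ (b * c) := by
    simpa only [mul_inv_cancel_right] using hbc.mul_left hac.inv_left
  simpa only [inv_mul_cancel_left] using (hG.commute_right a b).inv_right.mul_right hab

lemma quotient (hG : IsTwoEngel G) (N : Subgroup G) [N.Normal] : IsTwoEngel (G ⧸ N) := by
  intro x y
  induction x using QuotientGroup.induction_on with | _ x
  induction y using QuotientGroup.induction_on with | _ y
  exact (hG x y).map (QuotientGroup.mk' N)

end IsTwoEngel

lemma commutator_le_centralizer_upperCentralSeries_two (G : Type*) [Group G] :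
    commutator G ≤ Subgroup.centralizer (Subgroup.upperCentralSeries G 2 : Set G) := by
  have h : ⁅⁅Subgroup.upperCentralSeries G 2, (⊤ : Subgroup G)⁆, (⊤ : Subgroup G)⁆ = ⊥ := by
    rw [Subgroup.commutator_eq_bot_iff_le_centralizer, Subgroup.coe_top,
      Subgroup.centralizer_univ, ← Subgroup.upperCentralSeries_one]
    exact Subgroup.commutator_upperCentralSeries_top_le G 1
  rw [← Subgroup.commutator_eq_bot_iff_le_centralizer, commutator_def]
  refine Subgroup.commutator_commutator_eq_bot_of_rotate ?_ h
  rwa [Subgroup.commutator_comm ⊤]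

lemma commutatorElement_mem_commutator {G : Type*} [Group G] (x y : G) : ⁅x, y⁆ ∈ commutator G :=
  Subgroup.commutator_mem_commutator (Subgroup.mem_top x) (Subgroup.mem_top y)

variable {p : ℕ} [Fact p.Prime] {G : Type*} [Group G] [Finite G]

lemma IsTwoEngel.pow_seven_le_card (hG : IsTwoEngel G) (hpG : IsPGroup p G)
    (h3 : commutator G ≤ Subgroup.upperCentralSeries G 2) {a b c : G}
    (habc : ¬ Commute ⁅a, b⁆ c) : p ^ 7 ≤ Nat.card G := by
  have hacb : ¬ Commute ⁅a, c⁆ b := fun h ↦ habc (hG.commute_swap h)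
  have hbca : ¬ Commute ⁅b, c⁆ a := fun h ↦ habc <| by
    simpa only [commutatorElement_inv] using (hG.commute_swap h).inv_left
  set Z₂ := Subgroup.upperCentralSeries G 2
  have hmem (x y : G) : ⁅x, y⁆ ∈ Z₂ := h3 (commutatorElement_mem_commutator x y)
  have hcomm (x y z : G) (hz : z ∈ Z₂) : Commute ⁅x, y⁆ z :=
    (commutator_le_centralizer_upperCentralSeries_two G
      (commutatorElement_mem_commutator x y) z hz).symm
  have hb : b ∉ Z₂ := fun hb ↦ hacb (hcomm a c b hb)
  have hcenter : ⊥ < Z₂ ⊓ Subgroup.centralizer {a, b, c} := by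
    have : Nontrivial G := ⟨⁅a, b⁆, 1, fun h ↦ habc (h ▸ Commute.one_left c)⟩
    refine hpG.bot_lt_center.trans_le (le_inf ?_ (Subgroup.center_le_centralizer _))
    exact Subgroup.upperCentralSeries_one G ▸ Subgroup.upperCentralSeries_mono G one_le_two
  have hchain := card_mul_pow_length_le_card_of_isChain hpG ⊥
    [Z₂ ⊓ Subgroup.centralizer {a, b, c}, Z₂ ⊓ Subgroup.centralizer {a, b},
      Z₂ ⊓ Subgroup.centralizer {b}, Z₂, Subgroup.centralizer {⁅a, b⁆, ⁅b, c⁆},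
      Subgroup.centralizer {⁅a, b⁆}, ⊤] ?_
  · simpa using hchain
  simp only [List.isChain_cons_cons, List.isChain_singleton, and_true]
  have hC (s : Set G) (x : G) : x ∈ Subgroup.centralizer s ↔ ∀ y ∈ s, Commute y x := Iff.rfl
  have hlt {H K : Subgroup G} (hle : H ≤ K) (x : G) (hxK : x ∈ K) (hxH : x ∉ H) : H < K :=
    hle.lt_of_ne fun h ↦ hxH (h ▸ hxK)
  refine ⟨hcenter, hlt ?_ ⁅a, b⁆ ?_ ?_, hlt ?_ ⁅b, c⁆ ?_ ?_, hlt ?_ ⁅a, c⁆ ?_ ?_, hlt ?_ b ?_ ?_,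
    hlt ?_ a ?_ ?_, hlt ?_ c ?_ ?_⟩
  all_goals
    simp +contextual [SetLike.le_def, hC, hmem, hcomm, hb, habc, hacb, hbca,
      Commute.symm_iff (b := ⁅_, _⁆), hG _ _, hG.commute_right]

lemma IsTwoEngel.commutator_le_center (hG : IsTwoEngel G) (hpG : IsPGroup p G)
    (hcard : Nat.card G < p ^ 7) : commutator G ≤ Subgroup.center G := by
  have := hpG.isNilpotent
  revert hG hpG hcard
  refine Group.nilpotent_center_quotient_ind G
    (P := fun G _ _ ↦ [Finite G] → IsTwoEngel G → IsPGroup p G → Nat.card G < p ^ 7 →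
      commutator G ≤ Subgroup.center G)
    (fun G _ _ _ _ _ _ x _ ↦ Subsingleton.elim x 1 ▸ one_mem _) fun G _ _ ih _ hG hpG hcard ↦ ?_
  have hquot : commutator (G ⧸ Subgroup.center G) ≤ Subgroup.center (G ⧸ Subgroup.center G) :=
    ih (hG.quotient _) (hpG.to_quotient _)
      ((Nat.card_le_card_of_surjective _ (QuotientGroup.mk'_surjective _)).trans_lt hcard)
  have h3 : commutator G ≤ Subgroup.upperCentralSeries G 2 := by
    rw [← Subgroup.comap_upperCentralSeries_quotient_center, Subgroup.upperCentralSeries_one,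
      ← Subgroup.map_le_iff_le_comap]
    refine le_trans ?_ hquot
    rw [commutator_def, Subgroup.map_commutator, commutator_def]
    exact Subgroup.commutator_mono le_top le_top
  rw [commutator_def, Subgroup.commutator_le]
  intro a _ b _
  rw [Subgroup.mem_center_iff]
  intro c
  by_contra habc
  exact hcard.not_ge (hG.pow_seven_le_card hpG h3 fun h ↦ habc h.eq.symm)

end TwoEngel

section EGroupCentral

lemma mem_zpowers_zpowers_mk {G : Type*} [Group G] {g : G} (x : Subgroup.zpowers g) :
    x ∈ Subgroup.zpowers (⟨g, Subgroup.mem_zpowers g⟩ : Subgroup.zpowers g) := by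
  obtain ⟨_, k, rfl⟩ := x
  exact ⟨k, Subtype.ext rfl⟩

lemma exists_monoidHom_zpowers_apply_eq {A G : Type*} [Group A] [Group G] {a : A} {z : G}
    (h : orderOf z ∣ orderOf a) :
    ∃ f : Subgroup.zpowers a →* Subgroup.zpowers z,
      f ⟨a, Subgroup.mem_zpowers a⟩ = ⟨z, Subgroup.mem_zpowers z⟩ :=
  ⟨monoidHomOfForallMemZpowers mem_zpowers_zpowers_mk (by simpa only [Subgroup.orderOf_mk] using h),
    monoidHomOfForallMemZpowers_apply_gen _ _⟩

/- A character of `A` separating an element of maximal order has cyclic image of order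
`exponent A`, which maps onto `⟨z⟩`. -/
lemma exists_monoidHom_apply_eq_of_pow_exponent_eq_one {A G : Type*} [CommGroup A] [Finite A]
    [Group G] {z : G} (hz : z ^ Monoid.exponent A = 1) :
    ∃ (f : A →* Subgroup.zpowers z) (a : A), (f a : G) = z := by
  obtain ⟨a, ha⟩ := Monoid.exists_orderOf_eq_exponent (Monoid.ExponentExists.of_finite (G := A))
  have hne : NeZero (Monoid.exponent A) := ⟨Monoid.exponent_ne_zero_of_finite⟩
  obtain ⟨ζ, hζ⟩ : ∃ ζ : ℂˣ, IsPrimitiveRoot ζ (Monoid.exponent A) :=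
    ⟨_, (Complex.isPrimitiveRoot_exp _ hne.out).isUnit_unit hne.out⟩
  have hζA : orderOf ζ = Monoid.exponent A := hζ.eq_orderOf.symm
  obtain ⟨χ₀, hχ₀⟩ := exists_monoidHom_zpowers_apply_eq (a := a) (z := ζ) (by rw [hζA, ha])
  obtain ⟨χ, hχ⟩ := MonoidHom.domRestrict_surjective ℂ (Subgroup.zpowers a)
    ((Subgroup.zpowers ζ).subtype.comp χ₀)
  have hχa : χ a = ζ := by
    simpa [hχ₀] using DFunLike.congr_fun hχ ⟨a, Subgroup.mem_zpowers a⟩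
  have hχζ (x : A) : χ x ∈ Subgroup.zpowers ζ := by
    rw [hζ.zpowers_eq, mem_rootsOfUnity, ← map_pow, Monoid.pow_exponent_eq_one, map_one]
  obtain ⟨ψ, hψ⟩ := exists_monoidHom_zpowers_apply_eq (a := ζ) (z := z)
    (hζA ▸ orderOf_dvd_of_pow_eq_one hz)
  refine ⟨ψ.comp (χ.codRestrict _ hχζ), a, ?_⟩
  have hcod : χ.codRestrict _ hχζ a = ⟨ζ, Subgroup.mem_zpowers ζ⟩ := Subtype.ext hχa
  rw [MonoidHom.comp_apply, hcod, hψ]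

/- With `f : G → ⟨z⟩` and `f g = z`, every `h` with `f h = z ^ k` gives `f (h * g ^ (1 - k)) = z`,
so both `g` and `h * g ^ (1 - k)` commute with `z`. -/
lemma IsEGroup.mem_center_of_pow_exponent_eq_one {G : Type*} [Group G] [Finite G] (hG : IsEGroup G)
    {z : G} (hz : z ^ Monoid.exponent (Abelianization G) = 1) : z ∈ Subgroup.center G := by
  obtain ⟨f, a, ha⟩ := exists_monoidHom_apply_eq_of_pow_exponent_eq_one hz
  obtain ⟨g, rfl⟩ := QuotientGroup.mk'_surjective (commutator G) a
  let F : G →* G := (Subgroup.zpowers z).subtype.comp (f.comp Abelianization.of)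
  have hFg : F g = z := ha
  have hcomm {x : G} (hx : F x = z) : Commute x z := hx ▸ hG F x
  rw [Subgroup.mem_center_iff]
  intro h
  obtain ⟨k, hk : z ^ k = F h⟩ := (f (Abelianization.of h)).2
  have hshift : Commute (h * g ^ (1 - k)) z :=
    hcomm (by rw [map_mul, map_zpow, hFg, ← hk, ← zpow_add, add_sub_cancel, zpow_one])
  simpa only [mul_inv_cancel_right] using
    (hshift.mul_left ((hcomm hFg).zpow_left (1 - k)).inv_left).eq

open scoped commutatorElement in
lemma IsEGroup.isTwoEngel {G : Type*} [Group G] (hG : IsEGroup G) : IsTwoEngel G := by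
  intro x y
  have h : Commute (x⁻¹) (y * x⁻¹ * y⁻¹) := hG (MulAut.conj y).toMonoidHom x⁻¹
  have hx : Commute (x⁻¹) x := (Commute.refl x).inv_left
  have hxy : ⁅x, y⁆ = x * (y * x⁻¹ * y⁻¹) := by rw [commutatorElement_def]; group
  rw [hxy]
  simpa only [inv_inv] using (hx.mul_right h).inv_left.symm

end EGroupCentral

section CentralCommutators

open scoped commutatorElement

variable {G : Type*} [Group G] (hG : commutator G ≤ Subgroup.center G)
include hG

lemma commute_commutatorElement (x y z : G) : Commute ⁅x, y⁆ z :=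
  (Subgroup.mem_center_iff.mp (hG (commutatorElement_mem_commutator x y)) z).symm

lemma commutatorElement_mul_left (x y z : G) : ⁅x * y, z⁆ = ⁅x, z⁆ * ⁅y, z⁆ := by
  rw [commutatorElement_mul_left_eq_conj_mul, ← (commute_commutatorElement hG y z x).eq,
    mul_inv_cancel_right, (commute_commutatorElement hG y z _).eq]

lemma commutatorElement_mul_right (x y z : G) : ⁅x, y * z⁆ = ⁅x, y⁆ * ⁅x, z⁆ := by
  rw [commutatorElement_mul_right_eq_mul_conj, mul_assoc, mul_assoc, ← mul_assoc y,
    ← (commute_commutatorElement hG x z y).eq, mul_inv_cancel_right]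

/-- The homomorphism `⁅x, ·⁆` of a group whose commutators are central. -/
def commutatorElementHom (x : G) : G →* G where
  toFun y := ⁅x, y⁆
  map_one' := commutatorElement_one_right x
  map_mul' := commutatorElement_mul_right hG x

lemma commutatorElement_pow_right (x y : G) (n : ℕ) : ⁅x, y ^ n⁆ = ⁅x, y⁆ ^ n :=
  map_pow (commutatorElementHom hG x) y n

lemma commutatorElement_pow_left (x y : G) (n : ℕ) : ⁅x ^ n, y⁆ = ⁅x, y⁆ ^ n := by
  rw [← commutatorElement_inv, commutatorElement_pow_right hG, ← inv_pow, commutatorElement_inv]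

lemma commute_pow_left_iff (x y : G) (n : ℕ) : Commute (x ^ n) y ↔ ⁅x, y⁆ ^ n = 1 := by
  rw [← commutatorElement_pow_left hG, commutatorElement_eq_one_iff_commute]

lemma commute_pow_right_iff (x y : G) (n : ℕ) : Commute x (y ^ n) ↔ ⁅x, y⁆ ^ n = 1 := by
  rw [← commutatorElement_pow_right hG, commutatorElement_eq_one_iff_commute]

lemma mul_pow_eq_mul_commutatorElement_pow (x y : G) (n : ℕ) :
    (x * y) ^ n = x ^ n * y ^ n * ⁅y, x⁆ ^ n.choose 2 := by
  induction n with
  | zero => simp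
  | succ n ih =>
    have hc (k : ℕ) (g : G) : ⁅y, x⁆ ^ k * g = g * ⁅y, x⁆ ^ k :=
      (commute_commutatorElement hG y x g).pow_left k
    have hswap : y ^ n * x = x * y ^ n * ⁅y, x⁆ ^ n := by
      rw [← hc, ← commutatorElement_pow_left hG, commutatorElement_def]; group
    calc (x * y) ^ (n + 1) = x ^ n * (y ^ n * x) * y * ⁅y, x⁆ ^ n.choose 2 := by
          rw [pow_succ, ih, mul_assoc _ (⁅y, x⁆ ^ _), hc]; simp only [mul_assoc]
      _ = x ^ n * (x * y ^ n) * (⁅y, x⁆ ^ n * y) * ⁅y, x⁆ ^ n.choose 2 := by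
          rw [hswap]; simp only [mul_assoc]
      _ = x ^ (n + 1) * y ^ (n + 1) * ⁅y, x⁆ ^ (n + 1).choose 2 := by
          rw [hc n, Nat.choose_succ_succ' n 1, Nat.choose_one_right, pow_add ⁅y, x⁆, pow_succ x,
            pow_succ y]
          simp only [mul_assoc]

lemma pow_eq_one_of_mem_commutator {n : ℕ} (hpow : ∀ g : G, g ^ n ∈ Subgroup.center G) {d : G}
    (hd : d ∈ commutator G) : d ^ n = 1 := by
  rw [commutator_eq_closure] at hd
  induction hd using Subgroup.closure_induction with
  | mem d hd =>
    obtain ⟨x, y, rfl⟩ := hd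
    exact (commute_pow_left_iff hG x y n).mp (Subgroup.mem_center_iff.mp (hpow x) y).symm
  | one => exact one_pow n
  | mul d e _ he hdn hen =>
    rw [← commutator_eq_closure] at he
    have hcomm : Commute d e := Subgroup.mem_center_iff.mp (hG he) d
    rw [hcomm.mul_pow, hdn, hen, one_mul]
  | inv d _ hdn => rw [inv_pow, hdn, inv_one]

end CentralCommutators

section CentralPowers

open scoped commutatorElement

variable {G : Type*} [Group G]

lemma exponent_abelianization_dvd_iff {n : ℕ} :
    Monoid.exponent (Abelianization G) ∣ n ↔ ∀ g : G, g ^ n ∈ commutator G := by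
  have hof : Function.Surjective (Abelianization.of (G := G)) := QuotientGroup.mk'_surjective _
  rw [Monoid.exponent_dvd_iff_forall_pow_eq_one, hof.forall]
  refine forall_congr' fun g ↦ ?_
  rw [← map_pow, ← MonoidHom.mem_ker, Abelianization.ker_of]

lemma pow_exponent_abelianization_mem_commutator (x : G) :
    x ^ Monoid.exponent (Abelianization G) ∈ commutator G :=
  exponent_abelianization_dvd_iff.mp dvd_rfl x

lemma exponent_abelianization_ne_one (hG : commutator G ≤ Subgroup.center G)
    (hne : commutator G ≠ ⊥) : Monoid.exponent (Abelianization G) ≠ 1 := by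
  intro h
  have htop : commutator G = ⊤ := eq_top_iff.mpr fun g _ ↦ by
    simpa only [h, pow_one] using pow_exponent_abelianization_mem_commutator g
  exact hne ((commutator_eq_bot_iff_center_eq_top G).mpr (top_le_iff.mp (htop.symm.le.trans hG)))

lemma orderOf_commutatorElement_dvd_exponent (hG : commutator G ≤ Subgroup.center G) (x y : G) :
    orderOf ⁅x, y⁆ ∣ Monoid.exponent (Abelianization G) := by
  rw [orderOf_dvd_iff_pow_eq_one, ← commutatorElement_pow_right hG,
    commutatorElement_eq_one_iff_mul_comm]
  exact Subgroup.mem_center_iff.mp (hG (pow_exponent_abelianization_mem_commutator y)) x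

variable {p : ℕ} [Fact p.Prime]

lemma exists_exponent_abelianization_eq_pow [Finite G] (hpG : IsPGroup p G)
    (hG : commutator G ≤ Subgroup.center G) (hne : commutator G ≠ ⊥) :
    ∃ r ≠ 0, Monoid.exponent (Abelianization G) = p ^ r := by
  obtain ⟨r, hr⟩ := (hpG.to_quotient (commutator G)).exists_exponent_eq_pow
  exact ⟨r, fun h0 ↦ exponent_abelianization_ne_one hG hne (hr.trans (h0 ▸ pow_zero p)), hr⟩

lemma exists_orderOf_commutatorElement_eq_sq (hG : commutator G ≤ Subgroup.center G)
    (hpG : IsPGroup p G) {g : G} (hg : g ^ p ∉ Subgroup.center G) :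
    ∃ x y : G, orderOf ⁅x, y⁆ = p ^ 2 := by
  obtain ⟨h, hgh⟩ : ∃ h : G, ⁅g, h⁆ ^ p ≠ 1 := by
    simpa only [Subgroup.mem_center_iff, not_forall, ← commutatorElement_pow_left hG, ne_eq,
      commutatorElement_eq_one_iff_mul_comm, eq_comm] using hg
  obtain ⟨k, hk⟩ := IsPGroup.iff_orderOf.mp hpG ⁅g, h⁆
  have hk2 : 2 ≤ k := by
    by_contra! hlt
    refine hgh (orderOf_dvd_iff_pow_eq_one.mp (hk ▸ ?_))
    exact (pow_dvd_pow p (Nat.le_of_lt_succ hlt)).trans (pow_one p).dvd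
  refine ⟨g, h ^ p ^ (k - 2), ?_⟩
  rw [commutatorElement_pow_right hG, orderOf_pow_of_dvd (pow_ne_zero _ (NeZero.ne p))
    (hk ▸ pow_dvd_pow p (Nat.sub_le k 2)), hk, Nat.pow_div (Nat.sub_le k 2) (NeZero.pos p),
    Nat.sub_sub_self hk2]

lemma exists_mul_zpow_pow_eq_one {n : ℕ} {u v d : G} (huv : Commute u v) (hd : orderOf d = p)
    (hu : u ^ n ∈ Subgroup.zpowers d) (hv : v ^ n ∈ Subgroup.zpowers d) (hu1 : u ^ n ≠ 1) :
    ∃ k : ℤ, (v * u ^ k) ^ n = 1 := by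
  have hcard : Nat.card (Subgroup.zpowers d) = p := by rw [Nat.card_zpowers, hd]
  obtain ⟨k, hk : _ ^ k = _⟩ := mem_zpowers_of_prime_card (g := ⟨u ^ n, hu⟩) (g' := ⟨v ^ n, hv⟩)
    hcard fun h ↦ hu1 (congrArg Subtype.val h)
  have hk : (u ^ n) ^ k = v ^ n := congrArg Subtype.val hk
  refine ⟨-k, ?_⟩
  rw [(huv.symm.zpow_right _).mul_pow, ← hk, ← zpow_natCast (u ^ (-k)), ← zpow_mul, mul_comm (-k),
    zpow_mul, zpow_natCast, ← zpow_add, add_neg_cancel, zpow_zero]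

variable [Finite G]

/- `g ↦ (⁅x, g⁆, ⁅y, g⁆)` has kernel the centralizer and image containing `⟨⁅x, y⁆⟩ × ⟨⁅x, y⁆⟩`. -/
lemma orderOf_commutatorElement_sq_mul_card_centralizer_le (hG : commutator G ≤ Subgroup.center G)
    (x y : G) : orderOf ⁅x, y⁆ ^ 2 * Nat.card (Subgroup.centralizer {x, y}) ≤ Nat.card G := by
  let f : G →* G × G := (commutatorElementHom hG x).prod (commutatorElementHom hG y)
  have hf (g : G) : f g = (⁅x, g⁆, ⁅y, g⁆) := rfl
  have hker : f.ker = Subgroup.centralizer {x, y} := by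
    ext g
    simp [MonoidHom.mem_ker, hf, Subgroup.mem_centralizer_iff,
      commutatorElement_eq_one_iff_mul_comm]
  have hrange : (Subgroup.zpowers ⁅x, y⁆).prod (Subgroup.zpowers ⁅x, y⁆) ≤ f.range := by
    rw [Subgroup.prod_le_iff]
    simp only [Subgroup.map_le_iff_le_comap, Subgroup.zpowers_le]
    refine ⟨⟨y, by rw [hf, commutatorElement_self]; rfl⟩, ⟨x⁻¹, ?_⟩⟩
    rw [map_inv, hf, commutatorElement_self, Prod.inv_mk, commutatorElement_inv, inv_one]
    rfl
  calc orderOf ⁅x, y⁆ ^ 2 * Nat.card (Subgroup.centralizer {x, y})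
      = Nat.card ((Subgroup.zpowers ⁅x, y⁆).prod (Subgroup.zpowers ⁅x, y⁆)) * Nat.card f.ker := by
        rw [Nat.card_congr (Subgroup.prodEquiv _ _).toEquiv, Nat.card_prod, Nat.card_zpowers, hker,
          sq]
    _ ≤ Nat.card f.range * Nat.card f.ker := by
        gcongr
        exact Subgroup.card_le_of_le hrange
    _ = Nat.card G := by rw [← Subgroup.index_ker, mul_comm, Subgroup.card_mul_index]

lemma centralizer_pair_eq_zpowers_commutatorElement (hG : commutator G ≤ Subgroup.center G)
    {x y : G} (hcard : Nat.card G ≤ orderOf ⁅x, y⁆ ^ 3) :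
    Subgroup.centralizer {x, y} = Subgroup.zpowers ⁅x, y⁆ := by
  refine (Subgroup.eq_of_le_of_card_ge ?_ ?_).symm
  · exact (Subgroup.zpowers_le.mpr (hG (commutatorElement_mem_commutator x y))).trans
      (Subgroup.center_le_centralizer _)
  · have h := (orderOf_commutatorElement_sq_mul_card_centralizer_le hG x y).trans hcard
    rw [pow_succ] at h
    rw [Nat.card_zpowers]
    exact Nat.le_of_mul_le_mul_left h (pow_pos (orderOf_pos _) 2)

omit [Fact p.Prime] in
lemma pow_sq_mem_zpowers_commutatorElement (hG : commutator G ≤ Subgroup.center G)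
    (hcard : Nat.card G ≤ p ^ 6) {x y z : G} (hxy : orderOf ⁅x, y⁆ = p ^ 2)
    (hx : Commute x (z ^ p ^ 2)) (hy : Commute y (z ^ p ^ 2)) :
    (z ^ p) ^ p ^ 2 ∈ Subgroup.zpowers (⁅x, y⁆ ^ p) := by
  obtain ⟨i, hi : ⁅x, y⁆ ^ i = z ^ p ^ 2⟩ : z ^ p ^ 2 ∈ Subgroup.zpowers ⁅x, y⁆ := by
    rw [← centralizer_pair_eq_zpowers_commutatorElement hG (by rwa [hxy, ← pow_mul])]
    simpa [Subgroup.mem_centralizer_iff] using ⟨hx.eq, hy.eq⟩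
  refine ⟨i, ?_⟩
  simp only
  rw [← zpow_natCast, zpow_comm, hi, zpow_natCast, pow_right_comm]

/- If `⁅x, y⁆` had order `p ^ 2`, then the `p ^ 2`-th powers of `x ^ p` and `y ^ p` would lie in
a common subgroup of order `p`, so that `x ^ p` or some `y ^ p * (x ^ p) ^ k` would have order
dividing `p ^ 2`, hence be central. -/
lemma IsEGroup.pow_mem_center (hE : IsEGroup G) (hG : commutator G ≤ Subgroup.center G)
    (hpG : IsPGroup p G) (hcard : Nat.card G ≤ p ^ 6) (g : G) : g ^ p ∈ Subgroup.center G := by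
  by_contra hg
  obtain ⟨x, y, hxy⟩ := exists_orderOf_commutatorElement_eq_sq hG hpG hg
  have hcentral {z : G} (hz : z ^ p ^ 2 = 1) (t : G) : Commute t z := by
    refine Subgroup.mem_center_iff.mp
      (hE.mem_center_of_pow_exponent_eq_one (orderOf_dvd_iff_pow_eq_one.mp ?_)) t
    exact (orderOf_dvd_of_pow_eq_one hz).trans (hxy ▸ orderOf_commutatorElement_dvd_exponent hG x y)
  have hd : orderOf (⁅x, y⁆ ^ p) = p := by
    rw [orderOf_pow_of_dvd (NeZero.ne p) (hxy ▸ dvd_pow_self p two_ne_zero), hxy, sq,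
      Nat.mul_div_cancel _ (NeZero.pos p)]
  have hcp : ⁅x, y⁆ ^ p ≠ 1 := fun h ↦
    (Fact.out : p.Prime).ne_one (by rw [← hd, h, orderOf_one])
  have hcpp : ⁅x, y⁆ ^ p ^ 2 = 1 := hxy ▸ pow_orderOf_eq_one _
  have hu := pow_sq_mem_zpowers_commutatorElement hG hcard hxy
    ((Commute.refl x).pow_right _) ((commute_pow_left_iff hG x y _).mpr hcpp).symm
  have hv := pow_sq_mem_zpowers_commutatorElement hG hcard hxy
    ((commute_pow_right_iff hG x y _).mpr hcpp) ((Commute.refl y).pow_right _)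
  have hxpyp : Commute (x ^ p) (y ^ p) := by
    rwa [commute_pow_left_iff hG, commutatorElement_pow_right hG, ← pow_mul, ← sq]
  have hu1 : (x ^ p) ^ p ^ 2 ≠ 1 := fun h ↦
    hcp ((commute_pow_left_iff hG x y p).mp (hcentral h y).symm)
  obtain ⟨k, hk⟩ := exists_mul_zpow_pow_eq_one hxpyp hd hu hv hu1
  have hx : Commute x ((x ^ p) ^ k) := ((Commute.refl x).pow_right p).zpow_right k
  refine hcp ((commute_pow_right_iff hG x y p).mp ?_)
  simpa only [mul_inv_cancel_right] using (hcentral hk x).mul_right hx.inv_right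

end CentralPowers

section Lifting

variable {p : ℕ} [Fact p.Prime]

lemma complementedLattice_subgroup_of_forall_pow_eq_one {A : Type*} [CommGroup A]
    (hA : ∀ a : A, a ^ p = 1) : ComplementedLattice (Subgroup A) :=
  letI : Module (ZMod p) (Additive A) := AddCommGroup.zmodModule hA
  (Subgroup.toAddSubgroup.trans (AddSubgroup.toZModSubmodule p)).symm.complementedLattice

/-- The commutative group structure on a quotient by a subgroup containing the commutator
subgroup. -/
abbrev quotientCommGroup {G : Type*} [Group G] (N : Subgroup G) [N.Normal]
    (hN : commutator G ≤ N) : CommGroup (G ⧸ N) where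
  mul_comm := (Subgroup.Normal.quotient_commutative_iff_commutator_le.mpr hN).is_comm.comm

lemma exists_isCompl_of_commutator_le {G : Type*} [Group G] {N E : Subgroup G}
    (hcomm : commutator G ≤ N) (hpow : ∀ x, x ^ p ∈ N) (hE : Disjoint N E) :
    ∃ K : Subgroup G, IsCompl K E := by
  have : N.Normal := Subgroup.Normal.of_commutator_le _ hcomm
  let : CommGroup (G ⧸ N) := quotientCommGroup N hcomm
  have : ComplementedLattice (Subgroup (G ⧸ N)) :=
    complementedLattice_subgroup_of_forall_pow_eq_one (p := p) fun a ↦ by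
      obtain ⟨x, rfl⟩ := QuotientGroup.mk'_surjective N a
      rw [← map_pow]
      exact (QuotientGroup.eq_one_iff _).mpr (hpow x)
  obtain ⟨L, hL⟩ := exists_isCompl (E.map (QuotientGroup.mk' N))
  refine ⟨L.comap (QuotientGroup.mk' N), ?_, ?_⟩
  · rw [Subgroup.disjoint_def]
    intro x hxL hxE
    refine Subgroup.disjoint_def.mp hE ((QuotientGroup.eq_one_iff x).mp ?_) hxE
    exact Subgroup.disjoint_def.mp hL.disjoint ⟨x, hxE, rfl⟩ hxL
  · rw [codisjoint_iff, eq_top_iff]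
    intro x _
    obtain ⟨_, ⟨e, he, rfl⟩, l, hl, hel⟩ := Subgroup.mem_sup.mp
      (hL.sup_eq_top ▸ Subgroup.mem_top (QuotientGroup.mk' N x))
    have hxe : x * e⁻¹ ∈ L.comap (QuotientGroup.mk' N) := by
      rwa [Subgroup.mem_comap, map_mul, ← hel, map_inv, mul_comm _ l, mul_inv_cancel_right]
    rw [← inv_mul_cancel_right x e]
    exact mul_mem (Subgroup.mem_sup_left hxe) (Subgroup.mem_sup_right he)

lemma exists_monoidHom_forall_mem {G G' : Type*} [Group G] [Group G'] {H N : Subgroup (G × G')}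
    (hH : ∀ g, ∃ h, (g, h) ∈ H) (hcomm : ⁅H, H⁆ ≤ N) (hpow : ∀ x ∈ H, x ^ p ∈ N)
    (hN : ∀ h, (1, h) ∈ N → h = 1) : ∃ φ : G →* G', ∀ g, (g, φ g) ∈ H := by
  let f : H →* G := (MonoidHom.fst G G').comp H.subtype
  have hf : Function.Surjective f := fun g ↦
    have ⟨h, hh⟩ := hH g
    ⟨⟨(g, h), hh⟩, rfl⟩
  have hcomm' : commutator H ≤ N.subgroupOf H := by
    rw [commutator_def, Subgroup.commutator_le]
    exact fun x _ y _ ↦ hcomm (Subgroup.commutator_mem_commutator x.2 y.2)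
  have hdisj : Disjoint (N.subgroupOf H) f.ker := by
    rw [Subgroup.disjoint_def]
    rintro ⟨⟨g, h⟩, hgh⟩ hmem (rfl : g = 1)
    obtain rfl := hN h hmem
    rfl
  obtain ⟨K, hK⟩ := exists_isCompl_of_commutator_le hcomm' (fun x ↦ hpow x x.2) hdisj
  have hbij : Function.Bijective (f.comp K.subtype) := by
    refine ⟨?_, fun g ↦ ?_⟩
    · rw [← MonoidHom.ker_eq_bot_iff, eq_bot_iff]
      intro x hx
      exact Subtype.ext (Subgroup.disjoint_def.mp hK.disjoint x.2 hx)
    · obtain ⟨x, rfl⟩ := hf g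
      obtain ⟨k, hk, e, he, rfl⟩ := Subgroup.mem_sup_of_normal_right.mp
        (hK.sup_eq_top ▸ Subgroup.mem_top x)
      exact ⟨⟨k, hk⟩, by simp [(f.mem_ker).mp he]⟩
  let σ : G ≃* K := (MulEquiv.ofBijective _ hbij).symm
  refine ⟨(MonoidHom.snd G G').comp (H.subtype.comp (K.subtype.comp σ.toMonoidHom)), fun g ↦ ?_⟩
  have hσ : ((σ g : H) : G × G').1 = g := (MulEquiv.ofBijective _ hbij).apply_symm_apply g
  have hmem := (σ g : H).2
  rwa [← Prod.mk.eta (p := ((σ g : H) : G × G')), hσ] at hmem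

end Lifting

section AlternatingMaps

open Module Matrix

variable {F V W : Type*} [Field F] [AddCommGroup V] [Module F V] [AddCommGroup W] [Module F W]
  {b : V →ₗ[F] V →ₗ[F] W}

lemma finrank_le_choose_two_of_isAlt [FiniteDimensional F V] (hb : b.IsAlt)
    (hspan : Submodule.map₂ b ⊤ ⊤ = ⊤) : finrank F W ≤ (finrank F V).choose 2 := by
  let a : V [⋀^Fin 2]→ₗ[F] W :=
    { toFun v := b (v 0) (v 1)
      map_update_add' v i x y := by fin_cases i <;> simp [Function.update]
      map_update_smul' v i c x := by fin_cases i <;> simp [Function.update]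
      map_eq_zero_of_eq' v i j h hij := by
        fin_cases i <;> fin_cases j <;> simp_all [hb _] }
  let f : ⋀[F]^2 V →ₗ[F] W := exteriorPower.alternatingMapLinearEquiv a
  have hf : Function.Surjective f := by
    rw [← LinearMap.range_eq_top, eq_top_iff, ← hspan, Submodule.map₂_le]
    exact fun x _ y _ ↦ ⟨exteriorPower.ιMulti F 2 ![x, y], by simp [f, a]⟩
  rw [← exteriorPower.finrank_eq]
  exact LinearMap.finrank_le_finrank_of_surjective hf

lemma exists_linearIndependent_pair_apply_eq_zero [FiniteDimensional F W] (hb : b.IsAlt)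
    (hV : 3 ≤ finrank F V) (hW : finrank F W ≤ 2) :
    ∃ x y, LinearIndependent F ![x, y] ∧ b x y = 0 := by
  obtain ⟨e, he⟩ := exists_linearIndependent_of_le_finrank hV
  have hdep : ¬ LinearIndependent F fun i ↦ b (e (i + 1)) (e (i + 2)) := fun h ↦ by
    have := h.fintype_card_le_finrank
    simp only [Fintype.card_fin] at this
    lia
  obtain ⟨c, hc, i, hi⟩ := Fintype.not_linearIndependent_iff.mp hdep
  refine ⟨c i • e (i + 1) - c (i + 1) • e i, c i • e (i + 2) - c (i + 2) • e i, ?_, ?_⟩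
  · rw [LinearIndependent.pair_iff]
    intro s t hst
    rw [Fintype.linearIndependent_iff] at he
    have hg := he (fun j ↦ if j = i + 1 then s * c i else if j = i + 2 then t * c i else
      -(s * c (i + 1) + t * c (i + 2))) (by
        rw [← hst]
        fin_cases i <;> simp [Fin.sum_univ_three] <;> module)
    have h1 := hg (i + 1)
    have h2 := hg (i + 2)
    fin_cases i <;> simp_all
  · have hsum : b (c i • e (i + 1) - c (i + 1) • e i) (c i • e (i + 2) - c (i + 2) • e i) =
        c i • ∑ j, c j • b (e (j + 1)) (e (j + 2)) := by
      fin_cases i <;> simp [Fin.sum_univ_three, hb _, ← hb.neg (e 0) (e 1),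
        ← hb.neg (e 1) (e 2), ← hb.neg (e 0) (e 2)] <;> module
    rw [hsum, hc, smul_zero]

lemma exists_linearEquiv_apply_eq_cross [FiniteDimensional F V] [FiniteDimensional F W]
    (hb : b.IsAlt) (hspan : Submodule.map₂ b ⊤ ⊤ = ⊤) (hV : finrank F V = 3)
    (hW : finrank F W = 3) :
    ∃ (eV : V ≃ₗ[F] (Fin 3 → F)) (eW : W ≃ₗ[F] (Fin 3 → F)), ∀ x y, eW (b x y) = eV x ⨯₃ eV y := by
  let e : Basis (Fin 3) F V := finBasisOfFinrankEq F V hV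
  let w : Fin 3 → W := ![b (e 1) (e 2), b (e 2) (e 0), b (e 0) (e 1)]
  have hexp (x y : V) : b x y = ∑ i, (e.equivFun x ⨯₃ e.equivFun y) i • w i := by
    conv_lhs => rw [← e.sum_equivFun x, ← e.sum_equivFun y]
    simp only [Fin.sum_univ_three, map_add, map_smul, LinearMap.add_apply, LinearMap.smul_apply,
      hb _, ← hb.neg (e 0) (e 1), ← hb.neg (e 1) (e 2), ← hb.neg (e 2) (e 0), cross_apply, w,
      cons_val]
    module
  have hw : ⊤ ≤ Submodule.span F (Set.range w) := by
    rw [← hspan, Submodule.map₂_le]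
    intro x _ y _
    rw [hexp]
    exact sum_mem fun i _ ↦ Submodule.smul_mem _ _ (Submodule.subset_span ⟨i, rfl⟩)
  let f : Basis (Fin 3) F W := basisOfTopLeSpanOfCardEqFinrank w hw (by simp [hW])
  refine ⟨e.equivFun, f.equivFun, fun x y ↦ ?_⟩
  rw [← LinearEquiv.eq_symm_apply, f.equivFun_symm_apply, hexp]
  simp only [f, coe_basisOfTopLeSpanOfCardEqFinrank]

end AlternatingMaps

section NonorthogonalEndomorphisms

open Module Matrix

variable {F V W : Type*} [Field F] [AddCommGroup V] [Module F V] [AddCommGroup W] [Module F W]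

/-- The pair `(b, Q)` of a bilinear map and an arbitrary map has an endomorphism `A` of the source,
covering an endomorphism `B` of the target, that moves some vector to one not orthogonal to it. For
`b` the commutator and `Q` the `p`-th power map this is an obstruction to being an `E`-group. -/
def HasNonorthogonalEnd (b : V →ₗ[F] V →ₗ[F] W) (Q : V → W) : Prop :=
  ∃ (A : V →ₗ[F] V) (B : W →ₗ[F] W),
    (∀ x y, b (A x) (A y) = B (b x y)) ∧ (∀ x, Q (A x) = B (Q x)) ∧ ∃ x, b x (A x) ≠ 0

lemma mulVec_cross_mulVec (M : Matrix (Fin 3) (Fin 3) F) (x y : Fin 3 → F) :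
    (M *ᵥ x) ⨯₃ (M *ᵥ y) = M.adjugateᵀ *ᵥ (x ⨯₃ y) := by
  rw [adjugate_fin_three]
  ext i
  fin_cases i <;> simp [cross_apply, mulVec, dotProduct, Fin.sum_univ_three] <;> ring

lemma exists_eq_smul_one_of_cross_mulVec_eq_zero {M : Matrix (Fin 3) (Fin 3) F}
    (h : ∀ x, x ⨯₃ (M *ᵥ x) = 0) : ∃ c : F, M = c • 1 := by
  obtain ⟨c, hc⟩ := LinearMap.exists_eq_smul_id_of_forall_notLinearIndependent
    (f := Matrix.toLin' M) fun v hv ↦ crossProduct_ne_zero_iff_linearIndependent.mpr hv (h v)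
  refine ⟨c, Matrix.toLin'.injective ?_⟩
  rw [hc, map_smul, Matrix.toLin'_one]
  rfl

lemma hasNonorthogonalEnd_of_cross {b : V →ₗ[F] V →ₗ[F] W} {Q : V → W}
    (eV : V ≃ₗ[F] (Fin 3 → F)) (eW : W ≃ₗ[F] (Fin 3 → F)) (hb : ∀ x y, eW (b x y) = eV x ⨯₃ eV y)
    {M : Matrix (Fin 3) (Fin 3) F} (hM : ∀ c : F, M ≠ c • 1)
    (hQ : ∀ x, eW (Q (eV.symm (M *ᵥ x))) = M.adjugateᵀ *ᵥ eW (Q (eV.symm x))) :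
    HasNonorthogonalEnd b Q := by
  refine ⟨eV.symm.toLinearMap ∘ₗ M.mulVecLin ∘ₗ eV.toLinearMap,
    eW.symm.toLinearMap ∘ₗ (M.adjugateᵀ).mulVecLin ∘ₗ eW.toLinearMap, fun x y ↦ ?_, fun x ↦ ?_, ?_⟩
  · apply eW.injective
    simp [hb, mulVec_cross_mulVec, ← mulVec_transpose]
  · apply eW.injective
    simpa [← mulVec_transpose] using hQ (eV x)
  · by_contra! horth
    obtain ⟨c, hc⟩ := exists_eq_smul_one_of_cross_mulVec_eq_zero (M := M) fun x ↦ by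
      simpa [hb] using congrArg eW (horth (eV.symm x))
    exact hM c hc

end NonorthogonalEndomorphisms

section Isometries

open Matrix

variable {F n : Type*} [Field F] [Fintype n] [DecidableEq n] {P : Matrix n n F}

omit [DecidableEq n] in
lemma exists_dotProduct_mulVec_self_ne_zero (h2 : (2 : F) ≠ 0) (hP : P ≠ 0) (hsymm : Pᵀ = P) :
    ∃ v, v ⬝ᵥ P *ᵥ v ≠ 0 := by
  classical
  have := invertibleOfNonzero h2
  have hB : LinearMap.IsSymm (Matrix.toBilin' P) :=
    ⟨(Matrix.isSymm_toBilin'_iff_isSymm.mpr hsymm).eq⟩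
  obtain ⟨v, hv⟩ := LinearMap.BilinForm.exists_bilinForm_self_ne_zero
    (Matrix.toBilin'.map_ne_zero_iff.mpr hP) hB
  exact ⟨v, by rwa [Matrix.toBilin'_apply'] at hv⟩

omit [Fintype n] in
lemma one_sub_vecMulVec_ne_smul_one [Finite n] [Nontrivial n] {v w : n → F} (hv : v ≠ 0)
    (hw : w ≠ 0) (c : F) : 1 - vecMulVec v w ≠ c • 1 := by
  intro h
  have hvw : vecMulVec v w = (1 - c) • 1 := by
    rw [sub_smul, one_smul, ← h]
    abel
  rcases eq_or_ne (1 - c) 0 with hc | hc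
  · rw [hc, zero_smul, vecMulVec_eq_zero] at hvw
    exact hvw.elim hv hw
  · have := Fintype.ofFinite n
    have hrank := rank_vecMulVec_le v w
    rw [hvw, rank_smul_of_mem_nonZeroDivisors _ (mem_nonZeroDivisors_of_ne_zero hc),
      rank_one] at hrank
    exact hrank.not_gt Fintype.one_lt_card

lemma transpose_mul_mul_reflection {v : n → F} (hsymm : Pᵀ = P) (hv : v ⬝ᵥ P *ᵥ v ≠ 0) :
    (1 - vecMulVec ((2 / (v ⬝ᵥ P *ᵥ v)) • v) (P *ᵥ v))ᵀ * P *
      (1 - vecMulVec ((2 / (v ⬝ᵥ P *ᵥ v)) • v) (P *ᵥ v)) = P := by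
  set w := P *ᵥ v with hw
  have hvP : v ᵥ* P = w := by rw [← mulVec_transpose, hsymm]
  have hself : vecMulVec w w * vecMulVec v w = (v ⬝ᵥ w) • vecMulVec w w := by
    rw [vecMulVec_mul_vecMulVec, dotProduct_comm, vecMulVec_smul]
  simp only [smul_vecMulVec, transpose_sub, transpose_one, transpose_smul, transpose_vecMulVec,
    sub_mul, mul_sub, one_mul, mul_one, smul_mul_assoc, mul_smul_comm, mul_vecMulVec,
    vecMulVec_mul, hvP, ← hw, hself, smul_smul]
  rw [div_mul_cancel₀ _ hv]
  module

lemma transpose_mul_mul_cosquare (hP : IsUnit P.det) :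
    (P⁻¹ * Pᵀ)ᵀ * P * (P⁻¹ * Pᵀ) = P := by
  have hPt : IsUnit Pᵀ.det := by rwa [det_transpose]
  rw [transpose_mul, transpose_transpose, transpose_nonsing_inv, Matrix.mul_assoc,
    mul_nonsing_inv_cancel_left _ _ hP, Matrix.mul_assoc, nonsing_inv_mul _ hPt, Matrix.mul_one]

lemma transpose_eq_self_of_eq_smul (hn : Odd (Fintype.card n)) (hP : P.det ≠ 0) {c : F}
    (h : Pᵀ = c • P) : Pᵀ = P := by
  have hcn : c ^ Fintype.card n = 1 := by
    have hdet := congrArg det h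
    rwa [det_transpose, det_smul, eq_comm, mul_eq_right₀ hP] at hdet
  have := Fintype.card_pos_iff.mp hn.pos
  have hP0 : P ≠ 0 := by
    rintro rfl
    exact hP det_zero
  have hc2 : c ^ 2 = 1 := by
    refine smul_left_injective F hP0 ?_
    simp only
    rw [one_smul, sq, mul_smul, ← h, ← transpose_smul, ← h, transpose_transpose]
  obtain ⟨k, hk⟩ := hn
  rw [hk, pow_succ, pow_mul, hc2, one_pow, one_mul] at hcn
  rw [h, hcn, one_smul]

lemma exists_isometry_ne_smul_one [Nontrivial n] (hn : Odd (Fintype.card n)) (h2 : (2 : F) ≠ 0)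
    (hP : P.det ≠ 0) : ∃ M : Matrix n n F, Mᵀ * P * M = P ∧ ∀ c : F, M ≠ c • 1 := by
  by_cases hsymm : Pᵀ = P
  · have hP0 : P ≠ 0 := by
      rintro rfl
      exact hP det_zero
    obtain ⟨v, hv⟩ := exists_dotProduct_mulVec_self_ne_zero h2 hP0 hsymm
    refine ⟨_, transpose_mul_mul_reflection hsymm hv, one_sub_vecMulVec_ne_smul_one ?_ ?_⟩
    · refine smul_ne_zero (div_ne_zero h2 hv) ?_
      rintro rfl
      simp at hv
    · intro h0
      simp [h0] at hv
  · refine ⟨_, transpose_mul_mul_cosquare hP.isUnit, fun c hc ↦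
      hsymm (transpose_eq_self_of_eq_smul hn hP (c := c) ?_)⟩
    rw [← mul_nonsing_inv_cancel_left P Pᵀ hP.isUnit, hc, Matrix.mul_smul, Matrix.mul_one]

lemma mul_eq_transpose_adjugate_mul {M : Matrix n n F} (hM : Mᵀ * P * M = P) (hdet : M.det = 1) :
    P * M = M.adjugateᵀ * P := by
  conv_rhs => rw [← hM]
  rw [← Matrix.mul_assoc, ← Matrix.mul_assoc, ← transpose_mul, mul_adjugate, hdet, one_smul,
    transpose_one, Matrix.one_mul]

lemma exists_mul_eq_transpose_adjugate_mul [Nontrivial n] (hn : Odd (Fintype.card n))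
    (h2 : (2 : F) ≠ 0) (hP : P.det ≠ 0) :
    ∃ M : Matrix n n F, P * M = M.adjugateᵀ * P ∧ ∀ c : F, M ≠ c • 1 := by
  obtain ⟨M, hM, hscalar⟩ := exists_isometry_ne_smul_one hn h2 hP
  have hdet : M.det * M.det = 1 := by
    have h := congrArg det hM
    rwa [det_mul, det_mul, det_transpose, mul_right_comm, mul_eq_right₀ hP] at h
  rcases mul_self_eq_one_iff.mp hdet with hdet | hdet
  · exact ⟨M, mul_eq_transpose_adjugate_mul hM hdet, hscalar⟩
  · refine ⟨-M, mul_eq_transpose_adjugate_mul (by simpa using hM) ?_, fun c hc ↦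
      hscalar (-c) ?_⟩
    · rw [det_neg, hdet, hn.neg_one_pow, neg_one_mul, neg_neg]
    · rw [neg_smul, ← hc, neg_neg]

end Isometries

section LinearPowerMap

open Module Matrix

variable {F V W : Type*} [Field F] [AddCommGroup V] [Module F V] [AddCommGroup W] [Module F W]
  [FiniteDimensional F V] [FiniteDimensional F W] {b : V →ₗ[F] V →ₗ[F] W} {Q : V →ₗ[F] W}

lemma finrank_eq_three_of_injective [Nontrivial W] (hb : b.IsAlt)
    (hspan : Submodule.map₂ b ⊤ ⊤ = ⊤) (hQ : Function.Injective Q)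
    (hdim : finrank F V + finrank F W ≤ 6) : finrank F V = 3 ∧ finrank F W = 3 := by
  have hVW := LinearMap.finrank_le_finrank_of_injective hQ
  have hWV := finrank_le_choose_two_of_isAlt hb hspan
  have hW : 0 < finrank F W := finrank_pos
  have hV : finrank F V ≤ 3 := by lia
  interval_cases finrank F V <;> simp_all [Nat.choose] <;> lia

lemma hasNonorthogonalEnd_of_injective [Nontrivial W] (h2 : (2 : F) ≠ 0) (hb : b.IsAlt)
    (hspan : Submodule.map₂ b ⊤ ⊤ = ⊤) (hQ : Function.Injective Q)
    (hdim : finrank F V + finrank F W ≤ 6) : HasNonorthogonalEnd b Q := by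
  obtain ⟨hV, hW⟩ := finrank_eq_three_of_injective hb hspan hQ hdim
  obtain ⟨eV, eW, hcross⟩ := exists_linearEquiv_apply_eq_cross hb hspan hV hW
  let L : (Fin 3 → F) →ₗ[F] Fin 3 → F := eW.toLinearMap ∘ₗ Q ∘ₗ eV.symm.toLinearMap
  have hL : Function.Injective L := eW.injective.comp (hQ.comp eV.symm.injective)
  have hdet : (LinearMap.toMatrix' L).det ≠ 0 := by
    rw [LinearMap.det_toMatrix']
    exact (LinearMap.isUnit_iff_isUnit_det _).mp
      (LinearMap.isUnit_iff_ker_eq_bot L |>.mpr (LinearMap.ker_eq_bot.mpr hL)) |>.ne_zero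
  obtain ⟨M, hM, hscalar⟩ := exists_mul_eq_transpose_adjugate_mul (by decide) h2 hdet
  refine hasNonorthogonalEnd_of_cross eV eW hcross hscalar fun x ↦ ?_
  change L (M *ᵥ x) = M.adjugateᵀ *ᵥ L x
  rw [← LinearMap.toMatrix'_mulVec, ← LinearMap.toMatrix'_mulVec, mulVec_mulVec, hM, mulVec_mulVec]

end LinearPowerMap

section QuadraticPowerMap

open Module

open QuadraticMap (polar polar_self polar_comm polar_add_left polar_add_right
  polarBilin_apply_apply)

variable {V W : Type*} [AddCommGroup V] [Module (ZMod 2) V] [AddCommGroup W] [Module (ZMod 2) W]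
  {Q : QuadraticMap (ZMod 2) V W}

lemma polarBilin_isAlt : Q.polarBilin.IsAlt := fun x ↦ by
  rw [polarBilin_apply_apply, polar_self, two_smul, ZModModule.add_self]

lemma hasNonorthogonalEnd_of_apply_eq_polar (hQ : Q.Anisotropic) {N : V →ₗ[ZMod 2] V}
    (hN : N ≠ 0) (h : ∀ x, Q (N x) = polar Q x (N x)) : HasNonorthogonalEnd Q.polarBilin Q := by
  have hinv (x : V) : Q (x + N x) = Q x := by
    rw [QuadraticMap.map_add Q, ← h, add_assoc, ZModModule.add_self, add_zero]
  obtain ⟨x, hx⟩ := DFunLike.ne_iff.mp hN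
  refine ⟨LinearMap.id + N, LinearMap.id, fun x y ↦ ?_, hinv, x, fun h0 ↦ hx (hQ _ ?_)⟩
  · simp only [polarBilin_apply_apply, LinearMap.add_apply, LinearMap.id_apply, polar]
    rw [add_add_add_comm, ← map_add N, hinv, hinv, hinv]
  · rwa [LinearMap.add_apply, LinearMap.id_apply, map_add, polarBilin_isAlt, zero_add,
      polarBilin_apply_apply, ← h] at h0

lemma hasNonorthogonalEnd_of_finrank_eq_one (hQ : Q.Anisotropic) (hb : Q.polarBilin ≠ 0)
    (hW : finrank (ZMod 2) W = 1) : HasNonorthogonalEnd Q.polarBilin Q := by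
  have : FiniteDimensional (ZMod 2) W := .of_finrank_eq_succ hW
  let ψ : W ≃ₗ[ZMod 2] ZMod 2 := LinearEquiv.ofFinrankEq W (ZMod 2) (by simpa using hW)
  obtain ⟨x, hx⟩ := DFunLike.ne_iff.mp hb
  obtain ⟨y, hy⟩ := DFunLike.ne_iff.mp hx
  have hx0 : x ≠ 0 := by rintro rfl; simp at hx
  let f : V →ₗ[ZMod 2] ZMod 2 := ψ.toLinearMap ∘ₗ Q.polarBilin x
  have hf (z : V) : f z = 0 ∨ f z = 1 ∧ f z = ψ (Q x) := by
    have hQx : ψ (Q x) ≠ 0 := fun h ↦ hx0 (hQ x (ψ.map_eq_zero_iff.mp h))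
    revert hQx
    generalize f z = s, ψ (Q x) = t
    decide +revert
  refine hasNonorthogonalEnd_of_apply_eq_polar hQ (N := f.smulRight x) ?_ fun z ↦ ?_
  · have hfy : f y ≠ 0 := by simpa [f] using hy
    exact DFunLike.ne_iff.mpr ⟨y, by simpa using ⟨hfy, hx0⟩⟩
  · rw [LinearMap.smulRight_apply]
    rcases hf z with hz | ⟨hz1, hz⟩
    · simp [hz]
    · rw [hz1, one_smul, polar_comm]
      exact (ψ.injective hz).symm

lemma exists_mem_apply_eq_polar [FiniteDimensional (ZMod 2) V] [FiniteDimensional (ZMod 2) W]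
    (hQ : Q.Anisotropic) {P : Submodule (ZMod 2) V} (hP : ∀ x ∈ P, ∀ y ∈ P, polar Q x y = 0)
    (hdim : finrank (ZMod 2) W ≤ finrank (ZMod 2) P) {e : V} (he : e ∉ P) :
    ∃ n ∈ P, n ≠ 0 ∧ Q n = polar Q e n := by
  let L : P →ₗ[ZMod 2] W := (AddMonoidHom.mk' (fun x : P ↦ Q x + polar Q e x) fun x y ↦ by
    rw [Submodule.coe_add, QuadraticMap.map_add Q, hP _ x.2 _ y.2, polar_add_right]
    abel).toZModLinearMap 2
  have hL (x : P) : L x = Q x + polar Q e x := rfl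
  have hsurj : ¬ Function.Surjective L := fun h ↦ by
    obtain ⟨x, hx⟩ := h (Q e)
    have h0 : e + x = 0 := hQ _ <| by
      rw [QuadraticMap.map_add Q, add_assoc, ← hL, hx, ZModModule.add_self]
    exact he (eq_neg_of_add_eq_zero_left h0 ▸ P.neg_mem x.2)
  have hinj : ¬ Function.Injective L := fun h ↦ hsurj <|
    (LinearMap.injective_iff_surjective_of_finrank_eq_finrank
      (le_antisymm (LinearMap.finrank_le_finrank_of_injective h) hdim)).mp h
  rw [injective_iff_map_eq_zero] at hinj
  push Not at hinj
  obtain ⟨n, hn, hn0⟩ := hinj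
  exact ⟨n, n.2, by simpa using hn0, by
    rwa [hL, add_eq_zero_iff_eq_neg, ZModModule.neg_eq_self] at hn⟩

/-- Every map `m` from `U` to `P` without nontrivial zeros agrees with some nonzero linear map
wherever the latter does not vanish. -/
def HasLinearSelections (U P : Type*) [AddCommGroup U] [Module (ZMod 2) U] [AddCommGroup P]
    [Module (ZMod 2) P] : Prop :=
  ∀ m : U → P, (∀ u ≠ 0, m u ≠ 0) → ∃ N : U →ₗ[ZMod 2] P, N ≠ 0 ∧ ∀ u, N u = 0 ∨ N u = m u

lemma hasNonorthogonalEnd_of_isotropic [FiniteDimensional (ZMod 2) V]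
    [FiniteDimensional (ZMod 2) W] (hQ : Q.Anisotropic) {P : Submodule (ZMod 2) V}
    (hP : ∀ x ∈ P, ∀ y ∈ P, polar Q x y = 0) (hdim : finrank (ZMod 2) W ≤ finrank (ZMod 2) P)
    (hsel : HasLinearSelections (V ⧸ P) P) : HasNonorthogonalEnd Q.polarBilin Q := by
  have hkey (u : V ⧸ P) :
      ∃ n : P, u ≠ 0 → n ≠ 0 ∧ ∀ e : V, P.mkQ e = u → Q n = polar Q e n := by
    rcases eq_or_ne u 0 with rfl | hu
    · exact ⟨0, by simp⟩
    obtain ⟨e, rfl⟩ := P.mkQ_surjective u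
    obtain ⟨n, hnP, hn0, hn⟩ := exists_mem_apply_eq_polar hQ hP hdim (e := e) (by simpa using hu)
    refine ⟨⟨n, hnP⟩, fun _ ↦ ⟨by simpa using hn0, fun e' he' ↦ ?_⟩⟩
    rw [hn, ← sub_add_cancel e' e, polar_add_left,
      hP _ ((Submodule.Quotient.eq P).mp he') _ hnP, zero_add]
  choose m hm using hkey
  obtain ⟨N, hN0, hN⟩ := hsel m fun u hu ↦ (hm u hu).1
  refine hasNonorthogonalEnd_of_apply_eq_polar hQ (N := P.subtype ∘ₗ N ∘ₗ P.mkQ) ?_ fun x ↦ ?_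
  · obtain ⟨u, hu⟩ := DFunLike.ne_iff.mp hN0
    obtain ⟨e, rfl⟩ := P.mkQ_surjective u
    exact DFunLike.ne_iff.mpr ⟨e, by simpa using hu⟩
  · rcases eq_or_ne (N (P.mkQ x)) 0 with h0 | h0
    · simp [show N (Submodule.Quotient.mk x) = 0 from h0]
    · have hx : P.mkQ x ≠ 0 := fun h ↦ h0 (by rw [h, map_zero])
      simp only [LinearMap.comp_apply, Submodule.subtype_apply, (hN (P.mkQ x)).resolve_left h0]
      exact (hm _ hx).2 x rfl

lemma eq_zero_or_eq_one_of_zmod_two (s : ZMod 2) : s = 0 ∨ s = 1 := by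
  decide +revert

lemma eq_or_eq_or_eq_add_of_finrank_eq_two (hV : finrank (ZMod 2) V = 2) {a b c : V} (ha : a ≠ 0)
    (hb : b ≠ 0) (hc : c ≠ 0) (hab : a ≠ b) : c = a ∨ c = b ∨ c = a + b := by
  have : FiniteDimensional (ZMod 2) V := .of_finrank_eq_succ hV
  let e : V ≃ₗ[ZMod 2] (Fin 2 → ZMod 2) := (finBasisOfFinrankEq _ _ hV).equivFun
  have hfin : ∀ a b c : Fin 2 → ZMod 2, a ≠ 0 → b ≠ 0 → c ≠ 0 → a ≠ b →
      c = a ∨ c = b ∨ c = a + b := by decide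
  simpa [← map_add] using hfin (e a) (e b) (e c) (by simpa) (by simpa) (by simpa) (by simpa)

lemma hasLinearSelections_of_finrank_eq_one (hV : finrank (ZMod 2) V = 1) :
    HasLinearSelections V W := by
  intro m hm
  let e := basisUnique Unit hV
  refine ⟨(e.coord ()).smulRight (m (e ())), DFunLike.ne_iff.mpr ⟨e (), ?_⟩, fun u ↦ ?_⟩
  · simpa using hm _ (e.ne_zero ())
  · rw [← e.sum_repr u]
    rcases eq_zero_or_eq_one_of_zmod_two (e.repr u ()) with h | h <;> simp [h]

lemma hasLinearSelections_of_finrank_eq_two (hV : finrank (ZMod 2) V = 2)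
    (hW : finrank (ZMod 2) W = 2) : HasLinearSelections V W := by
  intro m hm
  have : FiniteDimensional (ZMod 2) V := .of_finrank_eq_succ hV
  let e := finBasisOfFinrankEq _ _ hV
  have hsel (n : Fin 2 → W) (hn : n ≠ 0) (h0 : n 0 = 0 ∨ n 0 = m (e 0))
      (h1 : n 1 = 0 ∨ n 1 = m (e 1)) (h01 : n 0 + n 1 = 0 ∨ n 0 + n 1 = m (e 0 + e 1)) :
      ∃ N : V →ₗ[ZMod 2] W, N ≠ 0 ∧ ∀ u, N u = 0 ∨ N u = m u := by
    obtain ⟨i, hi⟩ := Function.ne_iff.mp hn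
    refine ⟨e.constr ℕ n, DFunLike.ne_iff.mpr ⟨e i, by simpa using hi⟩, fun u ↦ ?_⟩
    rw [← e.sum_repr u, Fin.sum_univ_two, map_add, map_smul, map_smul, e.constr_basis,
      e.constr_basis]
    rcases eq_zero_or_eq_one_of_zmod_two (e.repr u 0) with hs | hs <;>
      rcases eq_zero_or_eq_one_of_zmod_two (e.repr u 1) with ht | ht <;> simp [*]
  have he01 : e 0 + e 1 ≠ 0 := fun h ↦ by
    simpa [e.repr_self, Finsupp.single_apply] using congrArg (fun v ↦ e.repr v 0) h
  have h0 := hm _ (e.ne_zero 0)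
  have h1 := hm _ (e.ne_zero 1)
  by_cases hab : m (e 0) = m (e 1)
  · exact hsel ![m (e 0), m (e 1)] (by simp [h0]) (by simp) (by simp)
      (by simp [hab, ZModModule.add_self])
  · rcases eq_or_eq_or_eq_add_of_finrank_eq_two hW h0 h1 (hm _ he01) hab with h | h | h
    · exact hsel ![m (e 0), 0] (by simp [h0]) (by simp) (by simp) (by simp [h])
    · exact hsel ![0, m (e 1)] (by simp [h1]) (by simp) (by simp) (by simp [h])
    · exact hsel ![m (e 0), m (e 1)] (by simp [h0]) (by simp) (by simp) (by simp [h])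

lemma hasNonorthogonalEnd_of_finrank_eq_two [FiniteDimensional (ZMod 2) V] (hQ : Q.Anisotropic)
    (hW : finrank (ZMod 2) W = 2) (hV : finrank (ZMod 2) V = 3 ∨ finrank (ZMod 2) V = 4) :
    HasNonorthogonalEnd Q.polarBilin Q := by
  have : FiniteDimensional (ZMod 2) W := .of_finrank_eq_succ hW
  obtain ⟨x, y, hlin, hxy⟩ :=
    exists_linearIndependent_pair_apply_eq_zero (polarBilin_isAlt (Q := Q)) (by lia) hW.le
  let P := Submodule.span (ZMod 2) (Set.range ![x, y])
  have hP : finrank (ZMod 2) P = 2 := by simpa using finrank_span_eq_card hlin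
  have hquot := P.finrank_quotient_add_finrank
  refine hasNonorthogonalEnd_of_isotropic hQ (P := P) ?_ (by lia) ?_
  · have hspan : Submodule.map₂ Q.polarBilin P P = ⊥ := by
      rw [Submodule.map₂_span_span, Submodule.span_eq_bot]
      rintro _ ⟨_, ⟨i, rfl⟩, _, ⟨j, rfl⟩, rfl⟩
      fin_cases i <;> fin_cases j <;>
        simp_all [polarBilin_isAlt _, polar_comm Q y x]
    intro u hu v hv
    exact (Submodule.mem_bot _).mp (hspan ▸ Submodule.apply_mem_map₂ Q.polarBilin hu hv)
  · rcases hV with hV | hV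
    · exact hasLinearSelections_of_finrank_eq_one (by lia)
    · exact hasLinearSelections_of_finrank_eq_two (by lia) hP

end QuadraticPowerMap

section CrossQuadraticMaps

open Matrix

/-- The maps `F₂³ → F₂³` whose polarization is the cross product, parametrized by the linear map
`P` by which they differ from `(x, y, z) ↦ (yz, zx, xy)`. -/
def crossQuadraticMap (P : Matrix (Fin 3) (Fin 3) (ZMod 2)) (x : Fin 3 → ZMod 2) :
    Fin 3 → ZMod 2 :=
  P *ᵥ x + ![x 1 * x 2, x 2 * x 0, x 0 * x 1]

/-- The number of vectors not orthogonal to their image, an invariant of the transformations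
`q ↦ gᵀ ∘ q ∘ g` for `g ∈ GL₃(F₂)`. -/
def crossWeight (q : (Fin 3 → ZMod 2) → Fin 3 → ZMod 2) : ℕ :=
  Finset.card {x | x ⬝ᵥ q x = 1}

variable {q : (Fin 3 → ZMod 2) → Fin 3 → ZMod 2}

lemma exists_eq_crossQuadraticMap (hq : ∀ x y, q (x + y) = q x + q y + x ⨯₃ y) :
    ∃ P, q = crossQuadraticMap P := by
  let L : (Fin 3 → ZMod 2) →ₗ[ZMod 2] Fin 3 → ZMod 2 :=
    (AddMonoidHom.mk' (fun x ↦ q x - ![x 1 * x 2, x 2 * x 0, x 0 * x 1]) fun x y ↦ by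
      rw [hq, cross_apply]
      ext i
      fin_cases i <;> simp <;> grind).toZModLinearMap 2
  refine ⟨LinearMap.toMatrix' L, funext fun x ↦ ?_⟩
  rw [crossQuadraticMap, LinearMap.toMatrix'_mulVec]
  exact (sub_add_cancel _ _).symm

lemma crossWeight_le (q : (Fin 3 → ZMod 2) → Fin 3 → ZMod 2) : crossWeight q ≤ 8 :=
  (Finset.card_le_univ _).trans (by simp)

lemma card_crossQuadraticMap_weight_eq_lt {k : ℕ} (hk : k < 9) :
    Fintype.card {P // (∀ x, crossQuadraticMap P x = 0 → x = 0) ∧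
      crossWeight (crossQuadraticMap P) = k} < 168 := by
  rw [Fintype.card_subtype]
  decide +kernel +revert

lemma card_gl_three_zmod_two : Fintype.card (GL (Fin 3) (ZMod 2)) = 168 := by
  rw [← Nat.card_eq_fintype_card, card_GL_field]
  simp [Fin.prod_univ_three]

lemma adjugate_eq_inv_of_zmod_two {n : Type*} [Fintype n] [DecidableEq n] (g : GL n (ZMod 2)) :
    g.1.adjugate = (g⁻¹).1 := by
  have hdet : g.1.det ≠ 0 := (isUnit_iff_isUnit_det _).mp g.isUnit |>.ne_zero
  rw [coe_units_inv, inv_def, (eq_zero_or_eq_one_of_zmod_two _).resolve_left hdet,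
    Ring.inverse_one, one_smul]

lemma transpose_mulVec_cross_eq (g : GL (Fin 3) (ZMod 2)) (x y : Fin 3 → ZMod 2) :
    g.1ᵀ *ᵥ ((g.1 *ᵥ x) ⨯₃ (g.1 *ᵥ y)) = x ⨯₃ y := by
  rw [mulVec_cross_mulVec, mulVec_mulVec, ← transpose_mul, adjugate_eq_inv_of_zmod_two,
    Units.inv_mul, transpose_one, one_mulVec]

lemma crossWeight_transpose_mulVec_comp (g : GL (Fin 3) (ZMod 2)) :
    crossWeight (fun x ↦ g.1ᵀ *ᵥ q (g.1 *ᵥ x)) = crossWeight q := by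
  simp only [crossWeight, mulVec_transpose, dotProduct_comm _ (_ ᵥ* _), ← dotProduct_mulVec]
  have hg : Function.Injective g.1.mulVec := mulVec_injective_of_isUnit g.isUnit
  exact Finset.card_bijective _ (Finite.injective_iff_bijective.mp hg) fun x ↦ by
    simp [dotProduct_comm]

/- The transforms `gᵀ ∘ q ∘ g` of `q` all lie in one class of fewer than `168 = |GL₃(F₂)|` maps, so
two of them coincide. -/
lemma exists_ne_transpose_mulVec_comp_eq (hq : ∀ x y, q (x + y) = q x + q y + x ⨯₃ y)
    (hq0 : ∀ x, q x = 0 → x = 0) :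
    ∃ g h : GL (Fin 3) (ZMod 2), g ≠ h ∧ ∀ x, g.1ᵀ *ᵥ q (g.1 *ᵥ x) = h.1ᵀ *ᵥ q (h.1 *ᵥ x) := by
  have hrepr (g : GL (Fin 3) (ZMod 2)) :
      ∃ P, (fun x ↦ g.1ᵀ *ᵥ q (g.1 *ᵥ x)) = crossQuadraticMap P :=
    exists_eq_crossQuadraticMap fun x y ↦ by
      simp only [mulVec_add, hq, transpose_mulVec_cross_eq]
  choose P hP using hrepr
  have hP0 (g : GL (Fin 3) (ZMod 2)) (x) (hx : crossQuadraticMap (P g) x = 0) : x = 0 := by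
    rw [← hP] at hx
    have hginj : Function.Injective g.1.mulVec := mulVec_injective_of_isUnit g.isUnit
    have hgtinj : Function.Injective g.1ᵀ.mulVec :=
      mulVec_injective_of_isUnit ((isUnit_transpose _).mpr g.isUnit)
    exact hginj ((hq0 _ (hgtinj (hx.trans (mulVec_zero _).symm))).trans (mulVec_zero _).symm)
  have hPw (g : GL (Fin 3) (ZMod 2)) : crossWeight (crossQuadraticMap (P g)) = crossWeight q := by
    rw [← hP, crossWeight_transpose_mulVec_comp]
  obtain ⟨g, h, hgh, heq⟩ := Fintype.exists_ne_map_eq_of_card_lt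
    (fun g ↦ (⟨P g, hP0 g, hPw g⟩ : {P // (∀ x, crossQuadraticMap P x = 0 → x = 0) ∧
      crossWeight (crossQuadraticMap P) = crossWeight q}))
    (by
      rw [card_gl_three_zmod_two]
      exact card_crossQuadraticMap_weight_eq_lt (Nat.lt_succ_of_le (crossWeight_le q)))
  have hPgh : P g = P h := congrArg Subtype.val heq
  exact ⟨g, h, hgh, congrFun ((hP g).trans (hPgh ▸ (hP h).symm))⟩

lemma exists_apply_mulVec_eq_transpose_adjugate (hq : ∀ x y, q (x + y) = q x + q y + x ⨯₃ y)
    (hq0 : ∀ x, q x = 0 → x = 0) :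
    ∃ M : Matrix (Fin 3) (Fin 3) (ZMod 2), (∀ c : ZMod 2, M ≠ c • 1) ∧
      ∀ x, q (M *ᵥ x) = M.adjugateᵀ *ᵥ q x := by
  obtain ⟨g, h, hgh, heq⟩ := exists_ne_transpose_mulVec_comp_eq hq hq0
  refine ⟨(h * g⁻¹ : GL (Fin 3) (ZMod 2)), fun c hc ↦ ?_, fun x ↦ ?_⟩
  · rcases eq_zero_or_eq_one_of_zmod_two c with rfl | rfl
    · exact (h * g⁻¹).ne_zero (by simpa using hc)
    · exact hgh (mul_inv_eq_one.mp (Units.ext (by simpa using hc))).symm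
  · have hx := congrArg ((h⁻¹).1ᵀ *ᵥ ·) (heq ((g⁻¹).1 *ᵥ x))
    simp only [mulVec_mulVec, Units.mul_inv, one_mulVec, ← transpose_mul] at hx
    rw [adjugate_eq_inv_of_zmod_two, _root_.mul_inv_rev, inv_inv, Units.val_mul, Units.val_mul, hx,
      transpose_one, one_mulVec]

end CrossQuadraticMaps

section QuadraticPowerMapDimensions

open Module Matrix

open QuadraticMap (polar polarBilin_apply_apply)

variable {V W : Type*} [AddCommGroup V] [Module (ZMod 2) V] [AddCommGroup W] [Module (ZMod 2) W]
  [FiniteDimensional (ZMod 2) V] [FiniteDimensional (ZMod 2) W] {Q : QuadraticMap (ZMod 2) V W}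

lemma hasNonorthogonalEnd_of_finrank_eq_three (hQ : Q.Anisotropic)
    (hspan : Submodule.map₂ Q.polarBilin ⊤ ⊤ = ⊤) (hV : finrank (ZMod 2) V = 3)
    (hW : finrank (ZMod 2) W = 3) : HasNonorthogonalEnd Q.polarBilin Q := by
  obtain ⟨eV, eW, hcross⟩ := exists_linearEquiv_apply_eq_cross polarBilin_isAlt hspan hV hW
  obtain ⟨M, hM, hMq⟩ := exists_apply_mulVec_eq_transpose_adjugate
    (q := fun x ↦ eW (Q (eV.symm x)))
    (fun x y ↦ by
      rw [map_add, QuadraticMap.map_add Q, map_add, map_add, ← polarBilin_apply_apply, hcross]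
      simp)
    (fun x hx ↦ eV.symm.map_eq_zero_iff.mp (hQ _ (eW.map_eq_zero_iff.mp hx)))
  exact hasNonorthogonalEnd_of_cross eV eW hcross hM hMq

lemma hasNonorthogonalEnd_of_anisotropic [Nontrivial W] (hQ : Q.Anisotropic)
    (hspan : Submodule.map₂ Q.polarBilin ⊤ ⊤ = ⊤)
    (hdim : finrank (ZMod 2) V + finrank (ZMod 2) W ≤ 6) :
    HasNonorthogonalEnd Q.polarBilin Q := by
  have hWV := finrank_le_choose_two_of_isAlt polarBilin_isAlt hspan
  have hWpos : 0 < finrank (ZMod 2) W := finrank_pos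
  have hV5 : finrank (ZMod 2) V ≤ 5 := by lia
  have hcases : finrank (ZMod 2) W = 1 ∨
      finrank (ZMod 2) W = 2 ∧ (finrank (ZMod 2) V = 3 ∨ finrank (ZMod 2) V = 4) ∨
      finrank (ZMod 2) V = 3 ∧ finrank (ZMod 2) W = 3 := by
    interval_cases finrank (ZMod 2) V <;> simp_all [Nat.choose] <;> lia
  rcases hcases with hW | ⟨hW, hV⟩ | ⟨hV, hW⟩
  · refine hasNonorthogonalEnd_of_finrank_eq_one hQ (fun h0 ↦ ?_) hW
    have hbot : Submodule.map₂ Q.polarBilin ⊤ ⊤ = ⊥ :=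
      eq_bot_iff.mpr (Submodule.map₂_le.mpr fun x _ y _ ↦ by simp [h0])
    exact bot_ne_top (hbot.symm.trans hspan)
  · exact hasNonorthogonalEnd_of_finrank_eq_two hQ hW hV
  · exact hasNonorthogonalEnd_of_finrank_eq_three hQ hspan hV hW

end QuadraticPowerMapDimensions

section CentralFrames

open Module
open scoped commutatorElement

/-- Additive coordinates on a group `G` whose elements killed by `q` are central and whose `q`-th
powers lie in the commutator subgroup: `V` is the quotient of `G` by the elements killed by `q`, and
`W` is the commutator subgroup. -/
structure CentralFrame (q : ℕ) (G V W : Type*) [Group G] [AddCommGroup V] [AddCommGroup W] where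
  proj : G →* Multiplicative V
  proj_surjective : Function.Surjective proj
  mem_ker_proj_iff (g : G) : g ∈ proj.ker ↔ g ^ q = 1
  ker_proj_le_center : proj.ker ≤ Subgroup.center G
  equiv : commutator G ≃* Multiplicative W
  pow_mem (g : G) : g ^ q ∈ commutator G

namespace CentralFrame

variable {q : ℕ} {G V W : Type*} [Group G] [AddCommGroup V] [AddCommGroup W]
  (F : CentralFrame q G V W)

/-- The coordinate of an element of `G` modulo the elements killed by `q`. -/
def coord (g : G) : V :=
  (F.proj g).toAdd

lemma coord_mul (g h : G) : F.coord (g * h) = F.coord g + F.coord h :=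
  congrArg Multiplicative.toAdd (map_mul F.proj g h)

lemma coord_surjective : Function.Surjective F.coord :=
  F.proj_surjective

/-- The inclusion of the commutator subgroup. -/
def incl : Multiplicative W →* G :=
  (commutator G).subtype.comp F.equiv.symm.toMonoidHom

/-- The commutator with a given coordinate. -/
def val (w : W) : G :=
  F.incl (.ofAdd w)

lemma val_add (w w' : W) : F.val (w + w') = F.val w * F.val w' :=
  map_mul F.incl _ _

lemma val_zero : F.val 0 = 1 :=
  map_one F.incl

lemma val_nsmul (n : ℕ) (w : W) : F.val (n • w) = F.val w ^ n :=
  map_pow F.incl _ n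

lemma val_injective : Function.Injective F.val :=
  (commutator G).subtype_injective.comp F.equiv.symm.injective

lemma val_toAdd_equiv (d : commutator G) : F.val (F.equiv d).toAdd = d :=
  congrArg Subtype.val (F.equiv.symm_apply_apply d)

lemma commutator_le_ker_proj : commutator G ≤ F.proj.ker :=
  Abelianization.commutator_subset_ker F.proj

include F in
lemma commutator_le_center : commutator G ≤ Subgroup.center G :=
  F.commutator_le_ker_proj.trans F.ker_proj_le_center

lemma exists_eq_mul_of_coord_eq {g g' : G} (h : F.coord g = F.coord g') :
    ∃ z ∈ F.proj.ker, g' = g * z := by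
  refine ⟨g⁻¹ * g', ?_, (mul_inv_cancel_left g g').symm⟩
  rw [MonoidHom.mem_ker, map_mul, map_inv]
  exact inv_mul_eq_one.mpr h

lemma commutatorElement_congr {g g' h h' : G} (hg : F.coord g = F.coord g')
    (hh : F.coord h = F.coord h') : ⁅g, h⁆ = ⁅g', h'⁆ := by
  obtain ⟨y, hy, rfl⟩ := F.exists_eq_mul_of_coord_eq hg
  obtain ⟨z, hz, rfl⟩ := F.exists_eq_mul_of_coord_eq hh
  have hcentral {x : G} (hx : x ∈ F.proj.ker) (t : G) : Commute t x :=
    Subgroup.mem_center_iff.mp (F.ker_proj_le_center hx) t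
  rw [commutatorElement_mul_left F.commutator_le_center,
    commutatorElement_mul_right F.commutator_le_center,
    commutatorElement_eq_one_iff_commute.mpr (hcentral hy _).symm,
    commutatorElement_eq_one_iff_commute.mpr (hcentral hz _), mul_one, mul_one]

lemma pow_congr {g g' : G} (h : F.coord g = F.coord g') : g ^ q = g' ^ q := by
  obtain ⟨z, hz, rfl⟩ := F.exists_eq_mul_of_coord_eq h
  have hcomm : Commute g z := Subgroup.mem_center_iff.mp (F.ker_proj_le_center hz) g
  rw [hcomm.mul_pow, (F.mem_ker_proj_iff z).mp hz, mul_one]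

/-- The commutator of two elements of `G`, as a function of their coordinates. -/
noncomputable def bracket (v w : V) : W :=
  (F.equiv ⟨⁅Function.surjInv F.coord_surjective v, Function.surjInv F.coord_surjective w⁆,
    commutatorElement_mem_commutator _ _⟩).toAdd

lemma val_bracket (g h : G) : F.val (F.bracket (F.coord g) (F.coord h)) = ⁅g, h⁆ :=
  (F.val_toAdd_equiv _).trans
    (F.commutatorElement_congr (Function.surjInv_eq _ _) (Function.surjInv_eq _ _))

lemma bracket_add_left (v v' w : V) : F.bracket (v + v') w = F.bracket v w + F.bracket v' w := by
  obtain ⟨g, rfl⟩ := F.coord_surjective v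
  obtain ⟨g', rfl⟩ := F.coord_surjective v'
  obtain ⟨h, rfl⟩ := F.coord_surjective w
  apply F.val_injective
  rw [← coord_mul, val_add, val_bracket, val_bracket, val_bracket,
    commutatorElement_mul_left F.commutator_le_center]

lemma bracket_add_right (v w w' : V) : F.bracket v (w + w') = F.bracket v w + F.bracket v w' := by
  obtain ⟨g, rfl⟩ := F.coord_surjective v
  obtain ⟨h, rfl⟩ := F.coord_surjective w
  obtain ⟨h', rfl⟩ := F.coord_surjective w'
  apply F.val_injective
  rw [← coord_mul, val_add, val_bracket, val_bracket, val_bracket,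
    commutatorElement_mul_right F.commutator_le_center]

/-- The `q`-th power of an element of `G`, as a function of its coordinate. -/
noncomputable def powMap (v : V) : W :=
  (F.equiv ⟨Function.surjInv F.coord_surjective v ^ q, F.pow_mem _⟩).toAdd

lemma val_powMap (g : G) : F.val (F.powMap (F.coord g)) = g ^ q :=
  (F.val_toAdd_equiv _).trans (F.pow_congr (Function.surjInv_eq _ _))

lemma powMap_eq_zero {v : V} (hv : F.powMap v = 0) : v = 0 := by
  obtain ⟨g, rfl⟩ := F.coord_surjective v
  have hg : g ^ q = 1 := by rw [← F.val_powMap, hv, val_zero]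
  exact congrArg Multiplicative.toAdd ((F.mem_ker_proj_iff g).mpr hg)

lemma powMap_add (v w : V) :
    F.powMap (v + w) = F.powMap v + F.powMap w + q.choose 2 • F.bracket w v := by
  obtain ⟨g, rfl⟩ := F.coord_surjective v
  obtain ⟨h, rfl⟩ := F.coord_surjective w
  apply F.val_injective
  rw [← coord_mul, val_add, val_add, val_nsmul, val_bracket, val_powMap, val_powMap, val_powMap,
    mul_pow_eq_mul_commutatorElement_pow F.commutator_le_center]

lemma card_mul_card_ker_proj : Nat.card V * Nat.card F.proj.ker = Nat.card G := by
  rw [← F.proj.ker.index_mul_card, Subgroup.index_ker, F.proj.range_eq_top.mpr F.proj_surjective,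
    Subgroup.card_top]
  rfl

include F in
lemma card_commutator : Nat.card (commutator G) = Nat.card W :=
  Nat.card_congr F.equiv.toEquiv

include F in
lemma card_mul_card_le [Finite G] : Nat.card V * Nat.card W ≤ Nat.card G := by
  rw [← F.card_mul_card_ker_proj, ← F.card_commutator]
  gcongr
  exact Subgroup.card_le_of_le F.commutator_le_ker_proj

lemma ker_proj_eq_commutator [Finite G] (hcard : Nat.card G ≤ Nat.card V * Nat.card W) :
    F.proj.ker = commutator G := by
  refine (Subgroup.eq_of_le_of_card_ge F.commutator_le_ker_proj ?_).symm
  have : Finite V := Finite.of_surjective F.coord F.coord_surjective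
  rw [← F.card_mul_card_ker_proj, ← F.card_commutator] at hcard
  exact Nat.le_of_mul_le_mul_left hcard Nat.card_pos

variable (p : ℕ) [Module (ZMod p) V] [Module (ZMod p) W]

/-- The commutator form of `G` in coordinates. -/
noncomputable def form : V →ₗ[ZMod p] V →ₗ[ZMod p] W :=
  AddMonoidHom.toZModLinearMap p <| .mk'
    (fun v ↦ AddMonoidHom.toZModLinearMap p (.mk' (F.bracket v) (F.bracket_add_right v)))
    fun v v' ↦ LinearMap.ext (F.bracket_add_left v v')

lemma form_apply (v w : V) : F.form p v w = F.bracket v w := rfl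

lemma form_isAlt : (F.form p).IsAlt := by
  intro v
  obtain ⟨g, rfl⟩ := F.coord_surjective v
  apply F.val_injective
  rw [form_apply, val_bracket, commutatorElement_self, val_zero]

lemma map₂_form_top : Submodule.map₂ (F.form p) ⊤ ⊤ = ⊤ := by
  let T : AddSubgroup W := (Submodule.map₂ (F.form p) ⊤ ⊤).toAddSubgroup
  have hT : commutator G ≤ T.toSubgroup.map F.incl := by
    rw [commutator_def, Subgroup.commutator_le]
    exact fun g _ h _ ↦ ⟨.ofAdd (F.bracket (F.coord g) (F.coord h)),
      Submodule.apply_mem_map₂ (F.form p) Submodule.mem_top Submodule.mem_top, F.val_bracket g h⟩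
  refine eq_top_iff.mpr fun w _ ↦ ?_
  obtain ⟨v, hv, h⟩ := hT (F.equiv.symm (.ofAdd w)).2
  exact F.val_injective h ▸ hv

/-- The `q`-th power map as a linear map, when commutator corrections vanish. -/
noncomputable def powLinearMap (hq : p ∣ q.choose 2) : V →ₗ[ZMod p] W :=
  AddMonoidHom.toZModLinearMap p <| .mk' F.powMap fun v w ↦ by
    rw [powMap_add, ← Nat.cast_smul_eq_nsmul (ZMod p), (ZMod.natCast_eq_zero_iff _ _).mpr hq,
      zero_smul, add_zero]

lemma powLinearMap_injective (hq : p ∣ q.choose 2) : Function.Injective (F.powLinearMap p hq) :=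
  (injective_iff_map_eq_zero _).mpr fun _ ↦ F.powMap_eq_zero

variable {p} [Fact p.Prime]

/- The subgroup of pairs `(g, h)` with `coord h = A (coord g)` has its commutators and `p`-th powers
in the graph of `B` over the commutator subgroup. -/
lemma not_isEGroup_of_hasNonorthogonalEnd (F : CentralFrame p G V W)
    (h : HasNonorthogonalEnd (F.form p) F.powMap) : ¬IsEGroup G := by
  intro hG
  obtain ⟨A, B, hAB, hAQ, v, hv⟩ := h
  let H : Subgroup (G × G) :=
    ((AddMonoidHom.toMultiplicative A.toAddMonoidHom).comp
      (F.proj.comp (.fst G G))).eqLocus (F.proj.comp (.snd G G))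
  let N : Subgroup (G × G) :=
    (F.incl.prod (F.incl.comp (AddMonoidHom.toMultiplicative B.toAddMonoidHom))).range
  have hH {g h : G} : (g, h) ∈ H ↔ A (F.coord g) = F.coord h := Iff.rfl
  have hN {g h : G} (w : W) (hg : F.val w = g) (hh : F.val (B w) = h) : (g, h) ∈ N :=
    ⟨.ofAdd w, Prod.ext hg hh⟩
  obtain ⟨φ, hφ⟩ := exists_monoidHom_forall_mem (p := p) (H := H) (N := N)
    (fun g ↦ (F.coord_surjective (A (F.coord g))).imp fun h ↦ Eq.symm)
    (by
      rw [Subgroup.commutator_le]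
      rintro ⟨g, h⟩ hgh ⟨g', h'⟩ hgh'
      refine hN (F.bracket (F.coord g) (F.coord g')) (F.val_bracket g g') ?_
      rw [← F.form_apply p, ← hAB, hH.mp hgh, hH.mp hgh', form_apply, val_bracket]
      rfl)
    (by
      rintro ⟨g, h⟩ hgh
      refine hN (F.powMap (F.coord g)) (F.val_powMap g) ?_
      rw [← hAQ, hH.mp hgh, val_powMap])
    (by
      rintro h ⟨w, hw⟩
      have hw0 : w.toAdd = 0 := F.val_injective ((congrArg Prod.fst hw).trans F.val_zero.symm)
      have hwh : F.val (B w.toAdd) = h := congrArg Prod.snd hw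
      rw [← hwh, hw0, map_zero, val_zero])
  obtain ⟨g, rfl⟩ := F.coord_surjective v
  refine hv (F.val_injective ?_)
  rw [hH.mp (hφ g), form_apply, val_bracket, val_zero, commutatorElement_eq_one_iff_mul_comm]
  exact hG φ g

variable [Finite G]

include F in
lemma finite_coord : Finite V :=
  Finite.of_surjective F.coord F.coord_surjective

include F in
lemma finite_val : Finite W :=
  Finite.of_injective F.val F.val_injective

include F in
lemma card_mul_card_eq_pow_finrank :
    Nat.card V * Nat.card W = p ^ (finrank (ZMod p) V + finrank (ZMod p) W) := by
  have := F.finite_coord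
  have := F.finite_val
  rw [Module.natCard_eq_pow_finrank (K := ZMod p) (V := V),
    Module.natCard_eq_pow_finrank (K := ZMod p) (V := W), Nat.card_zmod, pow_add]

include F in
lemma finrank_add_finrank_le {n : ℕ} (hcard : Nat.card G ≤ p ^ n) :
    finrank (ZMod p) V + finrank (ZMod p) W ≤ n :=
  (Nat.pow_le_pow_iff_right (Fact.out : p.Prime).one_lt).mp <|
    F.card_mul_card_eq_pow_finrank.symm.le.trans (F.card_mul_card_le.trans hcard)

include F in
lemma pow_mem_commutator_of_dvd_choose_two [Nontrivial W] (hq : p ∣ q.choose 2)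
    (hcard : Nat.card G ≤ p ^ 6) (g : G) : g ^ p ∈ commutator G := by
  have := F.finite_coord
  have := F.finite_val
  obtain ⟨hV, hW⟩ := finrank_eq_three_of_injective (F.form_isAlt p) (F.map₂_form_top p)
    (F.powLinearMap_injective p hq) (F.finrank_add_finrank_le hcard)
  rw [← F.ker_proj_eq_commutator
    (by rwa [F.card_mul_card_eq_pow_finrank (p := p), hV, hW]), MonoidHom.mem_ker, map_pow]
  exact congrArg Multiplicative.ofAdd (ZModModule.char_nsmul_eq_zero p (F.coord g))

/-- The squaring map as a quadratic form over the field with two elements. -/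
noncomputable def powQuadraticMap [Module (ZMod 2) V] [Module (ZMod 2) W]
    (F : CentralFrame 2 G V W) : QuadraticMap (ZMod 2) V W where
  toFun := F.powMap
  toFun_smul a v := by
    have hzero : F.powMap 0 = 0 := by
      simpa [← F.form_apply 2] using F.powMap_add 0 0
    rcases eq_zero_or_eq_one_of_zmod_two a with rfl | rfl <;> simp [hzero]
  exists_companion' := ⟨(F.form 2).flip, fun v w ↦ by simp [powMap_add, form_apply]⟩

omit [Finite G] in
lemma polarBilin_powQuadraticMap [Module (ZMod 2) V] [Module (ZMod 2) W]
    (F : CentralFrame 2 G V W) : F.powQuadraticMap.polarBilin = F.form 2 := by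
  ext v w
  rw [← (F.form_isAlt 2).neg, ZModModule.neg_eq_self]
  simp [QuadraticMap.polar, powQuadraticMap, powMap_add, form_apply, add_assoc]

lemma hasNonorthogonalEnd [Nontrivial W] (F : CentralFrame p G V W) (hcard : Nat.card G ≤ p ^ 6) :
    HasNonorthogonalEnd (F.form p) F.powMap := by
  have := F.finite_coord
  have := F.finite_val
  have hdim := F.finrank_add_finrank_le hcard
  rcases eq_or_ne p 2 with rfl | hp
  · rw [← F.polarBilin_powQuadraticMap]
    exact hasNonorthogonalEnd_of_anisotropic (Q := F.powQuadraticMap) (fun _ ↦ F.powMap_eq_zero)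
      (F.polarBilin_powQuadraticMap ▸ F.map₂_form_top 2) hdim
  · have hdvd : p ∣ p.choose 2 :=
      (Fact.out : p.Prime).dvd_choose_self two_ne_zero
        ((Fact.out : p.Prime).two_le.lt_of_ne' hp)
    have h2 : (2 : ZMod p) ≠ 0 := Ring.two_ne_zero (by rwa [ZMod.ringChar_zmod_n])
    exact hasNonorthogonalEnd_of_injective (Q := F.powLinearMap p hdvd) h2 (F.form_isAlt p)
      (F.map₂_form_top p) (F.powLinearMap_injective p hdvd) hdim

lemma exponent_abelianization_eq [Nontrivial W]
    (F : CentralFrame (Monoid.exponent (Abelianization G)) G V W) (hpG : IsPGroup p G)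
    (hcard : Nat.card G ≤ p ^ 6) : Monoid.exponent (Abelianization G) = p := by
  have hp : p.Prime := Fact.out
  have hne : commutator G ≠ ⊥ :=
    (Subgroup.nontrivial_iff_ne_bot _).mp F.equiv.toEquiv.nontrivial
  obtain ⟨r, hr0, hr⟩ := exists_exponent_abelianization_eq_pow hpG F.commutator_le_center hne
  rcases eq_or_ne 2 (p ^ r) with h2 | h2
  · have hp2 : p = 2 := (Nat.prime_dvd_prime_iff_eq hp Nat.prime_two).mp (h2 ▸ dvd_pow_self p hr0)
    rw [hr, ← h2, hp2]
  · have hdvd : p ∣ (Monoid.exponent (Abelianization G)).choose 2 :=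
      hr ▸ hp.dvd_choose_pow two_ne_zero h2
    exact ((Nat.dvd_prime hp).mp (exponent_abelianization_dvd_iff.mpr
      (F.pow_mem_commutator_of_dvd_choose_two hdvd hcard))).resolve_left
        (hr ▸ (one_lt_pow₀ hp.one_lt hr0).ne')

end CentralFrame

lemma IsEGroup.exists_centralFrame.{u} {p : ℕ} {G : Type u} [Group G] [Finite G]
    (hE : IsEGroup G) (hG : commutator G ≤ Subgroup.center G)
    (hcomm : ∀ g ∈ commutator G, g ^ p = 1)
    (hp : p ∣ Monoid.exponent (Abelianization G)) :
    ∃ (V W : Type u) (_ : AddCommGroup V) (_ : AddCommGroup W) (_ : Module (ZMod p) V)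
      (_ : Module (ZMod p) W),
      Nonempty (CentralFrame (Monoid.exponent (Abelianization G)) G V W) := by
  let q := Monoid.exponent (Abelianization G)
  have hcenter {g : G} (hg : g ^ q = 1) : g ∈ Subgroup.center G :=
    hE.mem_center_of_pow_exponent_eq_one hg
  let K : Subgroup G :=
    { carrier := {g | g ^ q = 1}
      one_mem' := one_pow q
      mul_mem' := fun {g h} hg hh ↦ by
        have hcomm : Commute g h := Subgroup.mem_center_iff.mp (hcenter hh) g
        rw [Set.mem_ofPred_eq, hcomm.mul_pow, hg, hh, one_mul]
      inv_mem' := fun {g} hg ↦ by rw [Set.mem_ofPred_eq, inv_pow, hg, inv_one] }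
  have hle : commutator G ≤ K := fun g hg ↦ orderOf_dvd_iff_pow_eq_one.mp
    ((orderOf_dvd_of_pow_eq_one (hcomm g hg)).trans hp)
  have : K.Normal := Subgroup.Normal.of_commutator_le _ hle
  let : CommGroup (G ⧸ K) := quotientCommGroup K hle
  let : CommGroup (commutator G) :=
    { mul_comm := fun g h ↦ Subtype.ext (Subgroup.mem_center_iff.mp (hG h.2) g) }
  have hV (a : G ⧸ K) : a ^ p = 1 := by
    obtain ⟨g, rfl⟩ := QuotientGroup.mk_surjective a
    refine (QuotientGroup.eq_one_iff (g ^ p)).mpr ?_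
    change (g ^ p) ^ q = 1
    rw [pow_right_comm, hcomm _ (pow_exponent_abelianization_mem_commutator g)]
  have hW (a : commutator G) : a ^ p = 1 := Subtype.ext (hcomm _ a.2)
  exact ⟨Additive (G ⧸ K), Additive (commutator G), inferInstance, inferInstance,
    AddCommGroup.zmodModule hV, AddCommGroup.zmodModule hW,
    ⟨{  proj := QuotientGroup.mk' K
        proj_surjective := QuotientGroup.mk'_surjective K
        mem_ker_proj_iff := QuotientGroup.eq_one_iff
        ker_proj_le_center := fun g hg ↦ hcenter ((QuotientGroup.eq_one_iff g).mp hg)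
        equiv := MulEquiv.refl _
        pow_mem := pow_exponent_abelianization_mem_commutator }⟩⟩

end CentralFrames

/-- For every prime `p`, every finite `p`-group that is an `E`-group and has
order at most `p ^ 6` is abelian. -/
theorem pEGroup_card_le_p_pow_six_comm
    (p : ℕ) (hp : p.Prime) {G : Type*} [Group G] [Finite G]
    (hpG : IsPGroup p G) (hE : IsEGroup G) (hcard : Nat.card G ≤ p ^ 6) :
    ∀ x y : G, x * y = y * x := by
  have : Fact p.Prime := ⟨hp⟩
  have hG : commutator G ≤ Subgroup.center G :=
    hE.isTwoEngel.commutator_le_center hpG (hcard.trans_lt (Nat.pow_lt_pow_succ hp.one_lt))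
  suffices hbot : commutator G = ⊥ from ((commutator_eq_bot_iff G).mp hbot).is_comm.comm
  by_contra hne
  obtain ⟨r, hr0, hr⟩ := exists_exponent_abelianization_eq_pow hpG hG hne
  obtain ⟨V, W, _, _, _, _, ⟨F⟩⟩ := hE.exists_centralFrame hG
    (fun g ↦ pow_eq_one_of_mem_commutator hG (hE.pow_mem_center hG hpG hcard))
    (hr ▸ dvd_pow_self p hr0)
  have : Nontrivial (commutator G) := (Subgroup.nontrivial_iff_ne_bot _).mpr hne
  have : Nontrivial W := F.equiv.symm.toEquiv.nontrivial
  rw [F.exponent_abelianization_eq hpG hcard] at F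
  exact F.not_isEGroup_of_hasNonorthogonalEnd (F.hasNonorthogonalEnd hcard) hE
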